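/- arXiv:1705.06213 — 3 statements merged into one kernel-verified Lean document; each statement's English description precedes it below -/
import Mathlib

section
/- Let G be a group acting k-acylindrically and without edge inversions on a simplicial tree T, where k is a nonnegative integer. Let g1, g2 ∈ G be elliptic elements with Fix(g1) ∩ Fix(g2) = ∅, set h = g1·g2, and let p be a positive integer with 2p ≥ k+1. Then the elements g1 and h^p·g1·h^{−p} generate a rank 2 free product in G. -/
open SimpleGraph Pointwise

section TreeDefs

variable {G : Type*} [Group G]

/-- The action of `G` on the vertices preserves adjacency. -/
def ActsByAut (G : Type*) [Group G] {V : Type*} [MulAction G V] (T : SimpleGraph V) : Prop :=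
  ∀ (g : G) (v w : V), T.Adj v w → T.Adj (g • v) (g • w)

/-- The action has no edge inversions: no element swaps the endpoints of an edge. -/
def NoEdgeInversion (G : Type*) [Group G] {V : Type*} [MulAction G V] (T : SimpleGraph V) : Prop :=
  ∀ (g : G) (v w : V), T.Adj v w → ¬(g • v = w ∧ g • w = v)

/-- The set of vertices fixed by `g`. -/
def Fixed (V : Type*) [MulAction G V] (g : G) : Set V := {v | g • v = v}

/-- `g` is elliptic: it fixes some vertex. -/
def IsElliptic (V : Type*) [MulAction G V] (g : G) : Prop := ∃ v : V, g • v = v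

/-- `g` is hyperbolic: it fixes no vertex. -/
def IsHyperbolic (V : Type*) [MulAction G V] (g : G) : Prop := ¬ ∃ v : V, g • v = v

/-- Translation length of `g`: the infimum of `d(v, g • v)` over all vertices `v`. -/
noncomputable def transLen {V : Type*} [MulAction G V] (T : SimpleGraph V) (g : G) : ℕ :=
  ⨅ v : V, T.dist v (g • v)

/-- The axis of a (hyperbolic) element: the vertices moved exactly the translation length. -/
noncomputable def Axis {V : Type*} [MulAction G V] (T : SimpleGraph V) (g : G) : Set V :=
  {v | T.dist v (g • v) = transLen T g}

/-- Diameter (in `ℕ∞`) of a set of vertices: the sup of pairwise simplicial distances. -/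
noncomputable def setDiam {V : Type*} (T : SimpleGraph V) (S : Set V) : ℕ∞ :=
  ⨆ v ∈ S, ⨆ w ∈ S, (T.dist v w : ℕ∞)

/-- Minimal simplicial distance between two sets of vertices. -/
noncomputable def setDist {V : Type*} (T : SimpleGraph V) (A B : Set V) : ℕ :=
  sInf {n : ℕ | ∃ v ∈ A, ∃ w ∈ B, T.dist v w = n}

/-- The action of `G` on `T` is `k`-acylindrical: the fixed-point set of every nontrivial
elliptic element has diameter at most `k`. -/
def AcylindricalAction {V : Type*} (T : SimpleGraph V) (G : Type*) [Group G] [MulAction G V]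
    (k : ℕ) : Prop :=
  ∀ g : G, g ≠ 1 → IsElliptic V g → setDiam T (Fixed V g) ≤ (k : ℕ∞)

/-- `a` and `b` generate a rank 2 free product in `G`: the canonical homomorphism
`⟨a⟩ ∗ ⟨b⟩ → G` from the free product of the cyclic subgroups generated by `a` and `b`
is injective. -/
def IsRank2FreeProduct {G : Type*} [Group G] (a b : G) : Prop :=
  Function.Injective
    (Monoid.Coprod.lift (Subgroup.zpowers a).subtype (Subgroup.zpowers b).subtype)

/-- `a` and `b` freely generate a rank 2 free subgroup of `G`: the homomorphism from the
free group on two generators sending the generators to `a` and `b` is injective. -/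
def FreelyGeneratesFreeSubgroup {G : Type*} [Group G] (a b : G) : Prop :=
  Function.Injective ((FreeGroup.lift (fun i : Bool => if i then a else b)) : FreeGroup Bool →* G)

/-- `a` and `b` freely generate a rank 2 free subsemigroup of `G`: the monoid homomorphism
from the free monoid on two generators sending the generators to `a` and `b` is injective. -/
def FreelyGeneratesFreeSubsemigroup {G : Type*} [Monoid G] (a b : G) : Prop :=
  Function.Injective ((FreeMonoid.lift (fun i : Bool => if i then a else b)) : FreeMonoid Bool →* G)

/-- A line in a simplicial tree: the image of an isometric embedding of `ℤ`. -/
def IsLine {V : Type*} (T : SimpleGraph V) (L : Set V) : Prop :=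
  ∃ f : ℤ → V, (∀ m n : ℤ, T.dist (f m) (f n) = (m - n).natAbs) ∧ L = Set.range f

end TreeDefs

/-!
Betweenness on geodesics (`d(x, m) + d(m, y) = d(x, y)`) is governed in a tree by one fact: a vertex
between `x` and `y` is, for every `w`, between `x` and `w` or between `w` and `y`. It follows that
overlapping geodesics concatenate.

Let `a ∈ Fix g₁` and `b ∈ Fix g₂` be at minimal distance `D`, and put `h = g₁g₂`. Then `g₁` moves
the first edge of `[a, b]` and `g₂` moves the last one, so `a, hb, ha, h²b, h²a, …` lie in this
order on a geodesic with gaps `D`, and `c = h^p a` is at distance `2pD` from `a`. The element `g₁`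
moves the direction of `[a, c]` at `a`, and `h^p g₁ h^(-p)` moves the direction of `[c, a]` at `c`.
Let `x` be the midpoint of `[a, c]`. If `g` is a nontrivial power of `g₁` and neither `v` nor `gv`
is closer to `a` than to `c`, then `x` lies on `[a, v]` and on `[a, gv]`, so `g` fixes `x`; since
`g` commutes with `g₁` it also fixes `g₁x`, at distance `2pD > k` from `x`. Hence the vertices
closer to `a` and those closer to `c` form a ping-pong table, with base point `x`.
-/

section PingPong

open Monoid

variable {G α : Type*} [Group G] [MulAction G α]

section Family

variable {ι : Type*} {H : ι → Type*} [∀ i, Group (H i)] {f : ∀ i, H i →* G} {X : ι → Set α}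

theorem lift_neWord_smul_mem_of_ping_pong
    (hpp : Pairwise fun i j ↦ ∀ h : H i, h ≠ 1 → ∀ v ∈ X j, f i h • v ∈ X i)
    {i j : ι} (w : CoprodI.NeWord H i j) {v : α} (hv : ∀ h : H j, h ≠ 1 → f j h • v ∈ X j) :
    CoprodI.lift f w.prod • v ∈ X i := by
  induction w generalizing v with
  | singleton h hh => simpa using hv h hh
  | append w₁ hne w₂ ih₁ ih₂ =>
    rw [CoprodI.NeWord.append_prod, map_mul, mul_smul]
    exact ih₁ fun h hh ↦ hpp hne h hh _ (ih₂ hv)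

/-- Unlike `Monoid.CoprodI.lift_injective_of_ping_pong`, this version covers two factors of order
two; the base point `x` outside the table replaces the cardinality assumption. -/
theorem coprodI_lift_injective_of_ping_pong {x : α} (hx : ∀ i, x ∉ X i)
    (hfx : ∀ i, ∀ h : H i, h ≠ 1 → f i h • x ∈ X i)
    (hpp : Pairwise fun i j ↦ ∀ h : H i, h ≠ 1 → ∀ v ∈ X j, f i h • v ∈ X i) :
    Function.Injective (CoprodI.lift f) := by
  classical
  rw [injective_iff_map_eq_one, CoprodI.Word.equiv.forall_congr_left]
  intro w hw
  by_contra hne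
  have hw_ne : w ≠ CoprodI.Word.empty := by
    rintro rfl
    exact hne CoprodI.Word.prod_empty
  obtain ⟨i, j, w', rfl⟩ := CoprodI.NeWord.of_word w hw_ne
  have hmem := lift_neWord_smul_mem_of_ping_pong hpp w' (hfx j)
  rw [show CoprodI.lift f w'.prod = 1 from hw, one_smul] at hmem
  exact hx i hmem

end Family

/-- The binary free product as a free product indexed by `Bool`, with `true` for the left factor,
as in `cond`. It carries ping-pong from `Monoid.CoprodI` to `Monoid.Coprod`. -/
def coprodEquivCoprodI (H : Bool → Type*) [∀ i, Monoid (H i)] :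
    Coprod (H true) (H false) ≃* CoprodI H :=
  MonoidHom.toMulEquiv (Coprod.lift CoprodI.of CoprodI.of)
    (CoprodI.lift (Bool.rec Coprod.inr Coprod.inl))
    (by ext <;> simp)
    (by ext i; cases i <;> simp)

theorem coprod_lift_subtype_injective_of_ping_pong {A B : Subgroup G} {X Y : Set α} {x : α}
    (hxX : x ∉ X) (hxY : x ∉ Y)
    (hA : ∀ g ∈ A, g ≠ 1 → ∀ v ∈ insert x Y, g • v ∈ X)
    (hB : ∀ g ∈ B, g ≠ 1 → ∀ v ∈ insert x X, g • v ∈ Y) :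
    Function.Injective (Coprod.lift A.subtype B.subtype) := by
  let S : Bool → Subgroup G := fun i ↦ cond i A B
  have hinj : Function.Injective (CoprodI.lift fun i ↦ (S i).subtype) := by
    refine coprodI_lift_injective_of_ping_pong (X := fun i ↦ cond i X Y) (x := x) ?_ ?_ ?_
    · rintro (_ | _)
      exacts [hxY, hxX]
    · rintro (_ | _) ⟨g, hg⟩ hne
      exacts [hB g hg (by simpa using hne) x (Set.mem_insert x X),
        hA g hg (by simpa using hne) x (Set.mem_insert x Y)]
    · rintro (_ | _) (_ | _) hij ⟨g, hg⟩ hne v hv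
      exacts [absurd rfl hij, hB g hg (by simpa using hne) v (Set.mem_insert_of_mem x hv),
        hA g hg (by simpa using hne) v (Set.mem_insert_of_mem x hv), absurd rfl hij]
  have hfactor : Coprod.lift A.subtype B.subtype =
      (CoprodI.lift fun i ↦ (S i).subtype).comp (coprodEquivCoprodI fun i ↦ S i).toMonoidHom := by
    apply Coprod.hom_ext
    · ext g
      exact (CoprodI.lift_of (fi := fun i ↦ (S i).subtype) (i := true) g).symm
    · ext g
      exact (CoprodI.lift_of (fi := fun i ↦ (S i).subtype) (i := false) g).symm
  rw [hfactor]
  exact hinj.comp (coprodEquivCoprodI fun i ↦ S i).injective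

end PingPong

section Betweenness

variable {V : Type*} {T : SimpleGraph V}

/-- The vertex `m` lies on a geodesic from `x` to `y`. Stated through distances; it is meant for
connected graphs, as `SimpleGraph.dist` is `0` between vertices of different components. -/
def IsBetween (T : SimpleGraph V) (x m y : V) : Prop :=
  T.dist x m + T.dist m y = T.dist x y

namespace IsBetween

variable {a c m n v w x y z : V}

theorem left (x y : V) : IsBetween T x x y := by
  simp [IsBetween]

theorem symm (h : IsBetween T x m y) : IsBetween T y m x := by
  simpa only [IsBetween, dist_comm, add_comm] using h

theorem of_mem_support {p : T.Walk x y} (hp : p.length = T.dist x y) (hm : m ∈ p.support) :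
    IsBetween T x m y := by
  classical
  have htake := T.dist_le (p.takeUntil m hm)
  have hdrop := T.dist_le (p.dropUntil m hm)
  have hsplit := congrArg Walk.length (p.take_spec hm)
  rw [Walk.length_append] at hsplit
  have htri := (p.takeUntil m hm).reachable.dist_triangle_left y
  unfold IsBetween
  omega

theorem exists_dist_eq (hT : T.Connected) {d : ℕ} (hd : d ≤ T.dist x y) :
    ∃ m, IsBetween T x m y ∧ T.dist x m = d := by
  obtain ⟨p, hp⟩ := hT.exists_walk_length_eq_dist x y
  have hbetween : IsBetween T x (p.getVert d) y := of_mem_support hp (p.getVert_mem_support d)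
  have htake := T.dist_le (p.take d)
  have hdrop := T.dist_le (p.drop d)
  rw [Walk.take_length] at htake
  rw [Walk.drop_length] at hdrop
  refine ⟨p.getVert d, hbetween, ?_⟩
  unfold IsBetween at hbetween
  omega

theorem trans_left (hT : T.Connected) (hxyz : IsBetween T x y z) (hxzw : IsBetween T x z w) :
    IsBetween T x y w := by
  have := hT.dist_triangle (u := x) (v := y) (w := w)
  have := hT.dist_triangle (u := y) (v := z) (w := w)
  unfold IsBetween at *
  omega

theorem trans_right (hT : T.Connected) (hxyz : IsBetween T x y z) (hxzw : IsBetween T x z w) :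
    IsBetween T y z w := by
  have := hT.dist_triangle (u := x) (v := y) (w := w)
  have := hT.dist_triangle (u := y) (v := z) (w := w)
  unfold IsBetween at *
  omega

theorem left_or_right (hT : T.IsTree) (h : IsBetween T x m y) (w : V) :
    IsBetween T x m w ∨ IsBetween T w m y := by
  classical
  obtain ⟨p₁, hp₁⟩ := hT.connected.exists_walk_length_eq_dist x m
  obtain ⟨p₂, hp₂⟩ := hT.connected.exists_walk_length_eq_dist m y
  obtain ⟨q₁, hq₁⟩ := hT.connected.exists_walk_length_eq_dist x w
  obtain ⟨q₂, hq₂⟩ := hT.connected.exists_walk_length_eq_dist w y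
  have hp : (p₁.append p₂).IsPath :=
    Walk.isPath_of_length_eq_dist _ (by rw [Walk.length_append, hp₁, hp₂, h])
  have hpq : p₁.append p₂ = (q₁.append q₂).bypass :=
    (hT.existsUnique_path x y).unique hp (Walk.bypass_isPath _)
  have hm : m ∈ (q₁.append q₂).bypass.support := by simp [← hpq]
  exact ((Walk.mem_support_append_iff _ _).1 (Walk.support_bypass_subset_support _ hm)).imp
    (of_mem_support hq₁) (of_mem_support hq₂)

theorem eq_of_dist_eq (hT : T.IsTree) (hm : IsBetween T x m y) (hn : IsBetween T x n y)
    (hmn : T.dist x m = T.dist x n) : m = n := by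
  refine hT.connected.dist_eq_zero_iff.1 ?_
  have hcomm := T.dist_comm (u := n) (v := m)
  rcases hm.left_or_right hT n with h | h <;> unfold IsBetween at * <;> omega

theorem concat_left (hT : T.IsTree) (hxyz : IsBetween T x y z) (hyzw : IsBetween T y z w)
    (hyz : y ≠ z) : IsBetween T x y w := by
  refine (hxyz.left_or_right hT w).resolve_right fun hwyz ↦ ?_
  have hpos := hT.connected.pos_dist_of_ne hyz
  have := T.dist_comm (u := w) (v := y)
  have := T.dist_comm (u := w) (v := z)
  unfold IsBetween at *
  omega

theorem concat_right (hT : T.IsTree) (hxyz : IsBetween T x y z) (hyzw : IsBetween T y z w)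
    (hyz : y ≠ z) : IsBetween T x z w :=
  (hyzw.symm.concat_left hT hxyz.symm hyz.symm).symm

theorem of_midpoint_of_dist_le (hT : T.IsTree) (hx : IsBetween T a x c)
    (hmid : T.dist a x = T.dist x c) (hv : T.dist v c ≤ T.dist v a) : IsBetween T a x v := by
  refine (hx.left_or_right hT v).elim id fun h ↦ ?_
  have htri := hT.connected.dist_triangle (u := a) (v := x) (w := v)
  have := T.dist_comm (u := v) (v := x)
  have := T.dist_comm (u := v) (v := a)
  unfold IsBetween at *
  omega

end IsBetween

theorem dist_le_setDiam {S : Set V} {v w : V} (hv : v ∈ S) (hw : w ∈ S) :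
    (T.dist v w : ℕ∞) ≤ setDiam T S :=
  le_iSup₂_of_le v hv (le_iSup₂_of_le w hw le_rfl)

theorem setDist_le_dist {A B : Set V} {a b : V} (ha : a ∈ A) (hb : b ∈ B) :
    setDist T A B ≤ T.dist a b :=
  Nat.sInf_le ⟨a, ha, b, hb, rfl⟩

/-- Positivity also excludes that `A` or `B` is empty, because then `setDist T A B = sInf ∅ = 0`. -/
theorem exists_dist_eq_setDist {A B : Set V} (h : 0 < setDist T A B) :
    ∃ a ∈ A, ∃ b ∈ B, T.dist a b = setDist T A B :=
  Nat.sInf_mem (Nat.nonempty_of_pos_sInf h)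

theorem setDist_pos (hT : T.Connected) {A B : Set V} (hA : A.Nonempty) (hB : B.Nonempty)
    (hAB : A ∩ B = ∅) : 0 < setDist T A B := by
  obtain ⟨a₀, ha₀⟩ := hA
  obtain ⟨b₀, hb₀⟩ := hB
  obtain ⟨a, ha, b, hb, hab⟩ : setDist T A B ∈ {n | ∃ v ∈ A, ∃ w ∈ B, T.dist v w = n} :=
    Nat.sInf_mem ⟨_, a₀, ha₀, b₀, hb₀, rfl⟩
  rw [← hab]
  refine hT.pos_dist_of_ne ?_
  rintro rfl
  exact Set.notMem_empty a (hAB ▸ ⟨ha, hb⟩)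

end Betweenness

section Action

variable {G V : Type*} [Group G] [MulAction G V] {T : SimpleGraph V}

theorem ActsByAut.edist_smul_le (hAct : ActsByAut G T) (g : G) (v w : V) :
    T.edist (g • v) (g • w) ≤ T.edist v w :=
  let f : T →g T := ⟨(g • ·), hAct g _ _⟩
  le_iInf fun p ↦ (edist_le (p.map f)).trans_eq (by rw [Walk.length_map])

theorem ActsByAut.dist_smul (hAct : ActsByAut G T) (g : G) (v w : V) :
    T.dist (g • v) (g • w) = T.dist v w := by
  refine congrArg ENat.toNat ((hAct.edist_smul_le g v w).antisymm ?_)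
  simpa only [inv_smul_smul] using hAct.edist_smul_le g⁻¹ (g • v) (g • w)

theorem IsBetween.smul (hAct : ActsByAut G T) {x m y : V} (h : IsBetween T x m y) (g : G) :
    IsBetween T (g • x) (g • m) (g • y) := by
  simpa only [IsBetween, hAct.dist_smul] using h

theorem setDiam_fixed_conj (hAct : ActsByAut G T) (g t : G) :
    setDiam T (Fixed V (t * g * t⁻¹)) = setDiam T (Fixed V g) := by
  have hfixed : Fixed V (t * g * t⁻¹) = (t • ·) '' Fixed V g :=
    (MulAction.smul_fixedBy V g t).symm
  simp only [hfixed, setDiam, iSup_image, hAct.dist_smul]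

theorem smul_eq_of_mem_zpowers {s g : G} {v : V} (hv : s • v = v) (hg : g ∈ Subgroup.zpowers s) :
    g • v = v :=
  Subgroup.zpowers_le.2 (show s ∈ MulAction.stabilizer G v from hv) hg

/-- For fixed `a`, `IsBetween T e a (s • e)` says that `s` moves the direction from `a` to `e`. -/
theorem IsBetween.smul_of_isBetween (hT : T.IsTree) (hAct : ActsByAut G T) {s : G} {a c e : V}
    (ha : s • a = a) (hea : e ≠ a) (haec : IsBetween T a e c) (he : IsBetween T e a (s • e)) :
    IsBetween T c a (s • c) := by
  have hse : a ≠ s • e := fun h ↦ hea (smul_left_cancel s (h.symm.trans ha.symm))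
  have hase : IsBetween T a (s • e) (s • c) := by simpa only [ha] using haec.smul hAct s
  exact (haec.symm.concat_right hT he hea).concat_left hT hase hse

theorem isBetween_smul_of_forall_dist_le (hT : T.IsTree) (hAct : ActsByAut G T) {s : G} {a b : V}
    (ha : s • a = a) (hmin : ∀ v : V, s • v = v → T.dist a b ≤ T.dist v b) :
    IsBetween T b a (s • b) := by
  rcases eq_or_ne a b with rfl | hab
  · exact .left _ _
  obtain ⟨e, haeb, hae⟩ :=
    IsBetween.exists_dist_eq hT.connected (Nat.one_le_of_lt (hT.connected.pos_dist_of_ne hab))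
  have hase : T.dist a (s • e) = 1 := by rw [← hae, ← hAct.dist_smul s a e, ha]
  have hmoved : e ≠ s • e := fun h ↦ by
    have := hmin e h.symm
    unfold IsBetween at haeb
    omega
  have hnot_adj : ¬ T.Adj e (s • e) := fun h ↦ hT.dist_ne_of_adj a h (hae.trans hase.symm)
  have hlt := hT.connected.one_lt_dist_of_ne_of_not_adj hmoved hnot_adj
  have htri := hT.connected.dist_triangle (u := e) (v := a) (w := s • e)
  have hea : T.dist e a = 1 := by rw [dist_comm, hae]
  refine IsBetween.smul_of_isBetween hT hAct ha ?_ haeb (by unfold IsBetween; omega)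
  rintro rfl
  simp at hae

theorem isBetween_pow_smul (hT : T.IsTree) (hAct : ActsByAut G T) {h : G} {a : V}
    (hne : a ≠ h • a) (hlocal : IsBetween T a (h • a) (h • h • a)) (n : ℕ) :
    IsBetween T a (h ^ n • a) (h ^ (n + 1) • a) := by
  induction n with
  | zero => simpa only [pow_zero, one_smul] using .left _ _
  | succ n ih =>
    have hstep : IsBetween T (h ^ n • a) (h ^ (n + 1) • a) (h ^ (n + 2) • a) := by
      simpa only [pow_succ, mul_smul] using hlocal.smul hAct (h ^ n)
    refine ih.concat_right hT hstep fun heq ↦ hne (smul_left_cancel (h ^ n) ?_)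
    rw [heq, pow_succ, mul_smul]

theorem dist_pow_smul (hT : T.IsTree) (hAct : ActsByAut G T) {h : G} {a : V}
    (hne : a ≠ h • a) (hlocal : IsBetween T a (h • a) (h • h • a)) (n : ℕ) :
    T.dist a (h ^ n • a) = n * T.dist a (h • a) := by
  induction n with
  | zero => simp
  | succ n ih =>
    calc T.dist a (h ^ (n + 1) • a)
        = T.dist a (h ^ n • a) + T.dist (h ^ n • a) (h ^ (n + 1) • a) :=
          Eq.symm (isBetween_pow_smul hT hAct hne hlocal n)
      _ = (n + 1 : ℕ) * T.dist a (h • a) := by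
          rw [ih, pow_succ, mul_smul, hAct.dist_smul, Nat.succ_mul]

theorem isBetween_smul_pow_succ_smul (hT : T.IsTree) (hAct : ActsByAut G T) {h : G} {a : V}
    (hne : a ≠ h • a) (hlocal : IsBetween T a (h • a) (h • h • a)) (n : ℕ) :
    IsBetween T a (h • a) (h ^ (n + 1) • a) := by
  have hshift : T.dist (h • a) (h ^ (n + 1) • a) = T.dist a (h ^ n • a) := by
    rw [pow_succ', mul_smul, hAct.dist_smul]
  rw [IsBetween, hshift, dist_pow_smul hT hAct hne hlocal, dist_pow_smul hT hAct hne hlocal]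
  ring

/-- The segment `[a, b]` is a shortest segment between the fixed-point sets of `g₁` and `g₂`. The
last two fields encode this by saying that `g₁` moves the direction of `[a, b]` at `a` and `g₂` that
of `[b, a]` at `b`. -/
structure IsBridge (T : SimpleGraph V) (g₁ g₂ : G) (a b : V) : Prop where
  ne : a ≠ b
  smul_left : g₁ • a = a
  smul_right : g₂ • b = b
  isBetween_left : IsBetween T b a (g₁ • b)
  isBetween_right : IsBetween T a b (g₂ • a)

namespace IsBridge

variable {g₁ g₂ : G} {a b : V}

theorem exists_dist_eq (hT : T.IsTree) (hAct : ActsByAut G T)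
    (hpos : 0 < setDist T (Fixed V g₁) (Fixed V g₂)) :
    ∃ a b, IsBridge T g₁ g₂ a b ∧ T.dist a b = setDist T (Fixed V g₁) (Fixed V g₂) := by
  obtain ⟨a, ha, b, hb, hab⟩ := exists_dist_eq_setDist hpos
  have hne : a ≠ b := by
    rintro rfl
    simp [← hab] at hpos
  refine ⟨a, b, ⟨hne, ha, hb, ?_, ?_⟩, hab⟩
  · exact isBetween_smul_of_forall_dist_le hT hAct ha fun v hv ↦ hab ▸ setDist_le_dist hv hb
  · refine isBetween_smul_of_forall_dist_le hT hAct hb fun v hv ↦ ?_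
    rw [T.dist_comm (u := b), T.dist_comm (u := v), hab]
    exact setDist_le_dist ha hv

theorem mul_smul_right (hab : IsBridge T g₁ g₂ a b) : (g₁ * g₂) • b = g₁ • b := by
  rw [mul_smul, hab.smul_right]

theorem isBetween_mul_smul (hab : IsBridge T g₁ g₂ a b) (hAct : ActsByAut G T) :
    IsBetween T a ((g₁ * g₂) • b) ((g₁ * g₂) • a) := by
  simpa only [mul_smul, hab.smul_left, hab.smul_right] using hab.isBetween_right.smul hAct g₁

theorem mul_smul_right_ne (hab : IsBridge T g₁ g₂ a b) : (g₁ * g₂) • b ≠ a := by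
  rw [hab.mul_smul_right]
  exact fun h ↦ hab.ne (smul_left_cancel g₁ (h.trans hab.smul_left.symm)).symm

theorem isBetween_mul_smul_mul_smul (hab : IsBridge T g₁ g₂ a b) (hT : T.IsTree)
    (hAct : ActsByAut G T) :
    IsBetween T a ((g₁ * g₂) • a) ((g₁ * g₂) • (g₁ * g₂) • a) := by
  set h := g₁ * g₂
  have hhb : h • b = g₁ • b := hab.mul_smul_right
  have ha_hb_ha : IsBetween T a (h • b) (h • a) := hab.isBetween_mul_smul hAct
  have hb_ha_hhb : IsBetween T (h • b) (h • a) (h • h • b) := by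
    simpa only [hhb] using hab.isBetween_left.smul hAct h
  have hne_b : h • b ≠ h • a := fun heq ↦ hab.ne (smul_left_cancel h heq.symm)
  have hne_a : h • a ≠ h • h • b := fun heq ↦ hab.mul_smul_right_ne (smul_left_cancel h heq.symm)
  exact (ha_hb_ha.concat_right hT hb_ha_hhb hne_b).concat_left hT (ha_hb_ha.smul hAct h) hne_a

theorem dist_mul_smul (hab : IsBridge T g₁ g₂ a b) (hAct : ActsByAut G T) :
    T.dist a ((g₁ * g₂) • a) = 2 * T.dist a b := by
  have ha_hb : T.dist a ((g₁ * g₂) • b) = T.dist a b := by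
    rw [hab.mul_smul_right, ← hAct.dist_smul g₁ a b, hab.smul_left]
  rw [← hab.isBetween_mul_smul hAct, ha_hb, hAct.dist_smul, T.dist_comm (u := b), two_mul]

theorem ne_mul_smul (hab : IsBridge T g₁ g₂ a b) (hT : T.IsTree) (hAct : ActsByAut G T) :
    a ≠ (g₁ * g₂) • a := fun h ↦ by
  have hdist := hab.dist_mul_smul hAct
  rw [← h, dist_self] at hdist
  have hpos := hT.connected.pos_dist_of_ne hab.ne
  omega

theorem dist_mul_pow_smul (hab : IsBridge T g₁ g₂ a b) (hT : T.IsTree) (hAct : ActsByAut G T)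
    (n : ℕ) : T.dist a ((g₁ * g₂) ^ n • a) = 2 * n * T.dist a b := by
  rw [dist_pow_smul hT hAct (hab.ne_mul_smul hT hAct) (hab.isBetween_mul_smul_mul_smul hT hAct),
    hab.dist_mul_smul hAct]
  ring

theorem isBetween_smul_mul_pow_smul (hab : IsBridge T g₁ g₂ a b) (hT : T.IsTree)
    (hAct : ActsByAut G T) (n : ℕ) :
    IsBetween T ((g₁ * g₂) ^ (n + 1) • a) a (g₁ • (g₁ * g₂) ^ (n + 1) • a) := by
  set h := g₁ * g₂
  have hhb : h • b = g₁ • b := hab.mul_smul_right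
  have ha_hb : IsBetween T a (h • b) (h ^ (n + 1) • a) :=
    (hab.isBetween_mul_smul hAct).trans_left hT.connected <|
      isBetween_smul_pow_succ_smul hT hAct (hab.ne_mul_smul hT hAct)
        (hab.isBetween_mul_smul_mul_smul hT hAct) n
  have hmoved : IsBetween T (h • b) a (g₁ • h • b) := by
    simpa only [hhb, hab.smul_left] using hab.isBetween_left.smul hAct g₁
  exact ha_hb.smul_of_isBetween hT hAct hab.smul_left hab.mul_smul_right_ne hmoved

theorem isBetween_conj_smul (hab : IsBridge T g₁ g₂ a b) (hT : T.IsTree)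
    (hAct : ActsByAut G T) (n : ℕ) :
    IsBetween T a ((g₁ * g₂) ^ (n + 1) • a)
      (((g₁ * g₂) ^ (n + 1) * g₁ * ((g₁ * g₂) ^ (n + 1))⁻¹) • a) := by
  set h := g₁ * g₂
  set t := h ^ (n + 1) with ht
  have hstep : IsBetween T (h ^ n • a) (t • b) (t • a) := by
    simpa only [ht, pow_succ, mul_smul (h ^ n) h] using
      (hab.isBetween_mul_smul hAct).smul hAct (h ^ n)
  have hpow : IsBetween T a (h ^ n • a) (t • a) :=
    isBetween_pow_smul hT hAct (hab.ne_mul_smul hT hAct)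
      (hab.isBetween_mul_smul_mul_smul hT hAct) n
  have hta_tb : IsBetween T (t • a) (t • b) a := hstep.symm.trans_left hT.connected hpow.symm
  have hmoved : IsBetween T (t • b) (t • a) ((t * g₁ * t⁻¹) • t • b) := by
    simpa only [mul_smul, inv_smul_smul] using hab.isBetween_left.smul hAct t
  have hfixed : (t * g₁ * t⁻¹) • t • a = t • a := by
    rw [mul_smul, inv_smul_smul, mul_smul, hab.smul_left]
  exact hta_tb.smul_of_isBetween hT hAct hfixed (fun heq ↦ hab.ne (smul_left_cancel t heq).symm)
    hmoved

end IsBridge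

theorem dist_smul_lt_dist_smul_of_dist_le (hT : T.IsTree) (hAct : ActsByAut G T) {s g : G}
    {a c x v : V} (hx : IsBetween T a x c) (hmid : T.dist a x = T.dist x c) (ha : s • a = a)
    (hs : IsBetween T c a (s • c)) (hg : g ∈ Subgroup.zpowers s)
    (hdiam : setDiam T (Fixed V g) < T.dist a c) (hv : T.dist v c ≤ T.dist v a) :
    T.dist (g • v) a < T.dist (g • v) c := by
  by_contra! hgv
  have hga : g • a = a := smul_eq_of_mem_zpowers ha hg
  have hgs : g * s = s * g := by
    obtain ⟨n, rfl⟩ := hg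
    exact (Commute.refl s).zpow_left n
  have hgx : g • x = x := by
    have hgx_gv : IsBetween T a (g • x) (g • v) := by
      simpa only [hga] using (hx.of_midpoint_of_dist_le hT hmid hv).smul hAct g
    have hx_gv : IsBetween T a x (g • v) := hx.of_midpoint_of_dist_le hT hmid hgv
    refine hgx_gv.eq_of_dist_eq hT hx_gv ?_
    rw [← hAct.dist_smul g a x, hga]
  have hgsx : g • s • x = s • x := by rw [← mul_smul, hgs, mul_smul, hgx]
  have hdist : T.dist x (s • x) = T.dist a c := by
    have ha_sx_sc : IsBetween T a (s • x) (s • c) := by simpa only [ha] using hx.smul hAct s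
    have hx_a_sc : IsBetween T x a (s • c) := hx.symm.trans_right hT.connected hs
    have hx_a_sx : IsBetween T x a (s • x) :=
      (ha_sx_sc.symm.trans_right hT.connected hx_a_sc.symm).symm
    have hsx : T.dist a (s • x) = T.dist a x := by rw [← hAct.dist_smul s a x, ha]
    rw [← hx_a_sx, ← hx, hsx, ← hmid, T.dist_comm (u := x)]
  have hle := dist_le_setDiam (T := T) (S := Fixed V g) hgx hgsx
  rw [hdist] at hle
  exact hle.not_gt hdiam

theorem isRank2FreeProduct_of_isBetween (hT : T.IsTree) (hAct : ActsByAut G T) {s t : G} {a c x : V}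
    (hx : IsBetween T a x c) (hmid : T.dist a x = T.dist x c) (ha : s • a = a) (hc : t • c = c)
    (hs : IsBetween T c a (s • c)) (ht : IsBetween T a c (t • a))
    (hs_diam : ∀ g ∈ Subgroup.zpowers s, g ≠ 1 → setDiam T (Fixed V g) < T.dist a c)
    (ht_diam : ∀ g ∈ Subgroup.zpowers t, g ≠ 1 → setDiam T (Fixed V g) < T.dist a c) :
    IsRank2FreeProduct s t := by
  have hxa : T.dist x a = T.dist x c := by rw [T.dist_comm (u := x), hmid]
  have hmid' : T.dist c x = T.dist x a := by rw [T.dist_comm (u := c), hxa]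
  refine coprod_lift_subtype_injective_of_ping_pong
    (X := {v | T.dist v a < T.dist v c}) (Y := {v | T.dist v c < T.dist v a}) (x := x)
    hxa.not_lt hxa.not_gt (fun g hg hne v hv ↦ ?_) (fun g hg hne v hv ↦ ?_)
  · have hvc : T.dist v c ≤ T.dist v a := hv.elim (fun h ↦ h ▸ hxa.ge) fun h ↦ le_of_lt h
    exact dist_smul_lt_dist_smul_of_dist_le hT hAct hx hmid ha hs hg (hs_diam g hg hne) hvc
  · have hva : T.dist v a ≤ T.dist v c := hv.elim (fun h ↦ h ▸ hxa.le) fun h ↦ le_of_lt h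
    exact dist_smul_lt_dist_smul_of_dist_le hT hAct hx.symm hmid' hc ht hg
      (T.dist_comm (u := a) ▸ ht_diam g hg hne) hva

theorem forall_mem_zpowers_conj_setDiam_lt (hAct : ActsByAut G T) {s : G} {d : ℕ∞}
    (hs : ∀ g ∈ Subgroup.zpowers s, g ≠ 1 → setDiam T (Fixed V g) < d) (t : G) :
    ∀ g ∈ Subgroup.zpowers (t * s * t⁻¹), g ≠ 1 → setDiam T (Fixed V g) < d := by
  rintro _ ⟨n, rfl⟩ hne
  simp only [conj_zpow] at hne ⊢
  rw [setDiam_fixed_conj hAct]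
  exact hs _ ⟨n, rfl⟩ (by simpa using hne)

end Action

theorem statement0_general {G V : Type*} [Group G] [MulAction G V] {T : SimpleGraph V}
    (hT : T.IsTree) (hAct : ActsByAut G T) {g₁ g₂ : G} {k p : ℕ}
    (hdiam : ∀ g ∈ Subgroup.zpowers g₁, g ≠ 1 → setDiam T (Fixed V g) ≤ k)
    (hk : k < 2 * p * setDist T (Fixed V g₁) (Fixed V g₂)) :
    IsRank2FreeProduct g₁ ((g₁ * g₂) ^ p * g₁ * ((g₁ * g₂) ^ p)⁻¹) := by
  obtain ⟨a, b, hab, hD⟩ :=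
    IsBridge.exists_dist_eq hT hAct (Nat.pos_of_mul_pos_left (Nat.zero_lt_of_lt hk))
  obtain ⟨n, rfl⟩ : ∃ n, p = n + 1 :=
    Nat.exists_eq_succ_of_ne_zero (by rintro rfl; simp at hk)
  set t := (g₁ * g₂) ^ (n + 1)
  have hdist : T.dist a (t • a) = 2 * (n + 1) * T.dist a b := hab.dist_mul_pow_smul hT hAct (n + 1)
  obtain ⟨x, hx, hax⟩ : ∃ x, IsBetween T a x (t • a) ∧ T.dist a x = (n + 1) * T.dist a b :=
    IsBetween.exists_dist_eq hT.connected (by rw [hdist]; gcongr; omega)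
  have hmid : T.dist a x = T.dist x (t • a) := by
    unfold IsBetween at hx
    linarith
  have hfixed : (t * g₁ * t⁻¹) • t • a = t • a := by
    rw [mul_smul, inv_smul_smul, mul_smul, hab.smul_left]
  have hlt : ∀ g ∈ Subgroup.zpowers g₁, g ≠ 1 → setDiam T (Fixed V g) < T.dist a (t • a) :=
    fun g hg hne ↦ (hdiam g hg hne).trans_lt (by rw [hdist, hD]; exact_mod_cast hk)
  exact isRank2FreeProduct_of_isBetween hT hAct hx hmid hab.smul_left hfixed
    (hab.isBetween_smul_mul_pow_smul hT hAct n) (hab.isBetween_conj_smul hT hAct n)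
    hlt (forall_mem_zpowers_conj_setDiam_lt hAct hlt t)

/-- If `G` acts `k`-acylindrically without edge inversions on a simplicial
tree, `g1, g2` are elliptic with disjoint fixed-point sets, `h = g1 * g2`, and `p` is a
positive integer with `2p ≥ k + 1`, then `g1` and `h^p * g1 * h^(-p)` generate a rank 2
free product in `G`. -/
theorem statement0 {G V : Type*} [Group G] [MulAction G V] (T : SimpleGraph V)
    (hT : T.IsTree) (hAct : ActsByAut G T) (hNoInv : NoEdgeInversion G T)
    (k : ℕ) (hAcyl : AcylindricalAction T G k)
    (g1 g2 : G) (hg1 : IsElliptic V g1) (hg2 : IsElliptic V g2)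
    (hdisj : Fixed V g1 ∩ Fixed V g2 = (∅ : Set V))
    (p : ℕ) (hp : 1 ≤ p) (hpk : k + 1 ≤ 2 * p) :
    IsRank2FreeProduct g1 ((g1 * g2) ^ p * g1 * ((g1 * g2) ^ p)⁻¹) := by
  have hpos := setDist_pos hT.connected hg1 hg2 hdisj
  exact statement0_general hT hAct
    (fun g hg hne ↦ hAcyl g hne (hg1.imp fun _ hv ↦ smul_eq_of_mem_zpowers hv hg))
    (hpk.trans (Nat.le_mul_of_pos_right _ hpos))
end

section
/- Let G be a group acting k-acylindrically and without edge inversions on a simplicial tree T, where k is a nonnegative integer. Let h1, h2 ∈ G be hyperbolic elements with Axis(h1) ≠ Axis(h2), and suppose the intersection Axis(h1) ∩ Axis(h2) has finite diameter strictly greater than 3k. Then for every integer p ≥ 3, either the elements h1 and h2^p·h1·h2^{−p} freely generate a rank 2 free subgroup of G, or the elements h2 and h1^p·h2·h1^{−p} freely generate a rank 2 free subgroup of G. -/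
open SimpleGraph Pointwise

/-!
A hyperbolic element translates its axis, so two elements whose axes share a segment longer than
the sum of their translation lengths have a commutator fixing a piece of that segment. By
acylindricity this piece has length at most `k` unless the elements commute, and commuting elements
have axes with unbounded intersection. The overlap of the two axes therefore has length at most
`transLen T h1 + transLen T h2 + k`, hence, being longer than `3 * k`, less than three times the
larger translation length. If this is that of `h2`, then `h2 ^ p` moves the overlap off itself along
the axis of `h2`, and so moves the axis of `h1` to a disjoint one. The two axes, of `h1` and of
its conjugate, are joined by a segment of the axis of `h2`, and the half-trees hanging off the
two ends of each of them play ping-pong.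
-/

namespace TreeAction

section Tree

variable {V : Type*} {T : SimpleGraph V}

lemma exists_adj_dist_eq_add_one (hconn : T.Connected) {x y : V} (hne : x ≠ y) :
    ∃ w, T.Adj w y ∧ T.dist x y = T.dist x w + 1 := by
  obtain ⟨p, hp⟩ := hconn.exists_walk_length_eq_dist y x
  cases p with
  | nil => exact absurd rfl hne
  | @cons _ w _ hadj q =>
    rw [Walk.length_cons] at hp
    refine ⟨w, hadj.symm, ?_⟩
    have hq : T.dist x w ≤ q.length := dist_comm (G := T) ▸ dist_le q
    have htri := hconn.dist_triangle (u := x) (v := w) (w := y)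
    rw [dist_eq_one_iff_adj.mpr hadj.symm] at htri
    rw [dist_comm] at hp
    omega

lemma eq_of_adj_of_dist_eq_add_one (hT : T.IsTree) {z u u' v : V} (hu : T.Adj u v)
    (hu' : T.Adj u' v) (hd : T.dist z v = T.dist z u + 1) (hd' : T.dist z v = T.dist z u' + 1) :
    u = u' := by
  obtain ⟨p, hp⟩ := hT.connected.exists_walk_length_eq_dist z u
  obtain ⟨q, hq⟩ := hT.connected.exists_walk_length_eq_dist z u'
  have hpath : (p.concat hu).IsPath :=
    Walk.isPath_of_length_eq_dist _ (by rw [Walk.length_concat, hp, hd])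
  have hpath' : (q.concat hu').IsPath :=
    Walk.isPath_of_length_eq_dist _ (by rw [Walk.length_concat, hq, hd'])
  have hpq := congrArg Walk.penultimate ((hT.existsUnique_path z v).unique hpath hpath')
  simpa using hpq

lemma dist_eq_dist_add_dist_of_adj (hT : T.IsTree) {x z u v : V} (huv : T.Adj u v)
    (hx : T.dist x v = T.dist x u + 1) (hz : T.dist z u = T.dist z v + 1) :
    T.dist x z = T.dist x v + T.dist v z := by
  induction hn : T.dist z v generalizing u v with
  | zero =>
    obtain rfl := hT.connected.dist_eq_zero_iff.mp hn
    simp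
  | succ n ih =>
    have hne : z ≠ v := by
      rintro rfl
      simp at hn
    obtain ⟨w, hwv, hw⟩ := exists_adj_dist_eq_add_one hT.connected hne
    have hxw : T.dist x w = T.dist x v + 1 := by
      refine (hT.dist_eq_dist_add_one_of_adj x hwv).resolve_right fun hvw => ?_
      obtain rfl := eq_of_adj_of_dist_eq_add_one hT huv hwv hx hvw
      omega
    have hvz := T.dist_comm (u := v) (v := z)
    have hwz := T.dist_comm (u := w) (v := z)
    have := ih hwv.symm hxw hw (by omega)
    omega

/-- Inductive step: when `y` moves one edge away from `x`, either both `z` and `w` become further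
away from it too, or `y` comes to lie on the geodesic from `x` to one of them. -/
lemma dist_add_dist_le_max (hT : T.IsTree) (x y z w : V) :
    T.dist x y + T.dist z w ≤
      max (T.dist x z + T.dist y w) (T.dist x w + T.dist y z) := by
  induction hn : T.dist x y generalizing y with
  | zero =>
    obtain rfl := hT.connected.dist_eq_zero_iff.mp hn
    have htri := hT.connected.dist_triangle (u := z) (v := x) (w := w)
    have hzx := T.dist_comm (u := z) (v := x)
    omega
  | succ n ih =>
    have hne : x ≠ y := by
      rintro rfl
      simp at hn
    obtain ⟨u, huy, hu⟩ := exists_adj_dist_eq_add_one hT.connected hne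
    have hstep := ih u (by omega)
    have htri := hT.connected.dist_triangle (u := z) (v := y) (w := w)
    have hyz := T.dist_comm (u := y) (v := z)
    have hyw := T.dist_comm (u := y) (v := w)
    have huz := T.dist_comm (u := u) (v := z)
    have huw := T.dist_comm (u := u) (v := w)
    rcases hT.dist_eq_dist_add_one_of_adj z huy with hz | hz
    · have := dist_eq_dist_add_dist_of_adj hT huy hu hz
      omega
    rcases hT.dist_eq_dist_add_one_of_adj w huy with hw | hw
    · have := dist_eq_dist_add_dist_of_adj hT huy hu hw
      omega
    omega

lemma dist_eq_add_add (hT : T.IsTree) {x u v y : V} (hne : u ≠ v)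
    (hx : T.dist x v = T.dist x u + T.dist u v) (hy : T.dist u y = T.dist u v + T.dist v y) :
    T.dist x y = T.dist x u + T.dist u v + T.dist v y := by
  have hpos := hT.connected.pos_dist_of_ne hne
  have hfour := dist_add_dist_le_max hT x v u y
  have htri := hT.connected.dist_triangle (u := x) (v := u) (w := y)
  have hvu := T.dist_comm (u := v) (v := u)
  omega

lemma eq_of_dist_add_dist_eq (hT : T.IsTree) {x y u u' : V}
    (hu : T.dist x u + T.dist u y = T.dist x y) (hu' : T.dist x u' + T.dist u' y = T.dist x y)
    (hxu : T.dist x u = T.dist x u') : u = u' := by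
  have hfour := dist_add_dist_le_max hT x y u u'
  have hyu := T.dist_comm (u := y) (v := u)
  have hyu' := T.dist_comm (u := y) (v := u')
  exact hT.connected.dist_eq_zero_iff.mp (by omega)

lemma dist_eq_of_nonbacktracking (hT : T.IsTree) {γ : ℕ → V} {n : ℕ}
    (hadj : ∀ m < n, T.Adj (γ m) (γ (m + 1)))
    (hne : ∀ m, m + 2 ≤ n → γ m ≠ γ (m + 2)) : T.dist (γ 0) (γ n) = n := by
  induction n using Nat.twoStepInduction with
  | zero => exact dist_self
  | one => exact dist_eq_one_iff_adj.mpr (hadj 0 one_pos)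
  | more n ih ih' =>
    have hn := ih (fun m hm => hadj m (by omega)) fun m hm => hne m (by omega)
    have hn' := ih' (fun m hm => hadj m (by omega)) fun m hm => hne m (by omega)
    have hlast : T.Adj (γ (n + 1)) (γ (n + 2)) := hadj (n + 1) (by omega)
    refine (hT.dist_eq_dist_add_one_of_adj (γ 0) hlast).elim
      (fun hback => absurd ?_ (hne n le_rfl)) (by omega)
    exact eq_of_adj_of_dist_eq_add_one hT (hadj n (by omega)) hlast.symm (by omega) hback

/-- The vertices closer to `u` than to `v`. When `u` and `v` are the endpoints of an edge of a
tree, this is the component containing `u` of the tree with that edge removed. -/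
def halfTree (T : SimpleGraph V) (u v : V) : Set V := {w | T.dist w u < T.dist w v}

lemma compl_halfTree (hT : T.IsTree) {u v : V} (huv : T.Adj u v) :
    (halfTree T u v)ᶜ = halfTree T v u := by
  ext w
  exact not_lt.trans ⟨fun h => h.lt_of_ne (hT.dist_ne_of_adj w huv.symm), le_of_lt⟩

lemma disjoint_halfTree (hT : T.IsTree) {u u' v v' : V} (hu : T.Adj u' u) (hv : T.Adj v' v)
    (huv : T.dist u' v' = T.dist u v + 2) : Disjoint (halfTree T u' u) (halfTree T v' v) := by
  refine Set.disjoint_left.mpr fun w hwu hwv => ?_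
  change T.dist w u' < T.dist w u at hwu
  change T.dist w v' < T.dist w v at hwv
  have hu1 := dist_eq_one_iff_adj.mpr hu
  have hv1 := dist_eq_one_iff_adj.mpr hv.symm
  have htri := hT.connected.dist_triangle (u := u') (v := u) (w := v')
  have htri' := hT.connected.dist_triangle (u := u) (v := v) (w := v')
  have hfour := dist_add_dist_le_max hT w u u' v'
  have hfour' := dist_add_dist_le_max hT w v v' u
  have hv'u := T.dist_comm (u := v') (v := u)
  have hu'u := T.dist_comm (u := u) (v := u')
  have hvu := T.dist_comm (u := v) (v := u)
  omega

/-- `f` is a geodesic line of `T`: an isometric embedding of `ℤ` into the vertices. The map is kept,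
rather than its range as in `IsLine`, so that translations along the line are visible. -/
def IsGeodesicLine (T : SimpleGraph V) (f : ℤ → V) : Prop :=
  ∀ m n : ℤ, T.dist (f m) (f n) = (m - n).natAbs

namespace IsGeodesicLine

variable {f e : ℤ → V}

lemma adj (hf : IsGeodesicLine T f) {m n : ℤ} (hmn : (m - n).natAbs = 1) : T.Adj (f m) (f n) :=
  dist_eq_one_iff_adj.mp ((hf m n).trans hmn)

lemma ne (hf : IsGeodesicLine T f) {m n : ℤ} (hmn : m ≠ n) : f m ≠ f n := by
  intro h
  have hd := hf m n
  rw [h, dist_self] at hd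
  omega

lemma comp_add_left (hf : IsGeodesicLine T f) (c : ℤ) : IsGeodesicLine T fun n => f (c + n) :=
  fun m n => (hf _ _).trans (by omega)

lemma comp_sub_left (hf : IsGeodesicLine T f) (c : ℤ) : IsGeodesicLine T fun n => f (c - n) :=
  fun m n => (hf _ _).trans (by omega)

lemma of_nonbacktracking (hT : T.IsTree) (hadj : ∀ n, T.Adj (f n) (f (n + 1)))
    (hne : ∀ n, f n ≠ f (n + 2)) : IsGeodesicLine T f := by
  have hray (m : ℤ) (j : ℕ) : T.dist (f m) (f (m + j)) = j := by
    have h := dist_eq_of_nonbacktracking hT (γ := fun i : ℕ => f (m + i)) (n := j)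
      (fun i _ => by simpa [add_assoc] using hadj (m + i))
      (fun i _ => by simpa [add_assoc] using hne (m + i))
    simpa using h
  intro m n
  rcases le_total m n with h | h
  · have := hray m (n - m).toNat
    rw [show m + ((n - m).toNat : ℤ) = n by omega] at this
    omega
  · have := hray n (m - n).toNat
    rw [show n + ((m - n).toNat : ℤ) = m by omega, dist_comm] at this
    omega

lemma exists_dist_eq_add_natAbs (hT : T.IsTree) (hf : IsGeodesicLine T f) (v : V) :
    ∃ i, ∀ j, T.dist v (f j) = T.dist v (f i) + (j - i).natAbs := by
  obtain ⟨i, hi⟩ : ∃ i, ∀ j, T.dist v (f i) ≤ T.dist v (f j) :=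
    ⟨_, fun j => Function.argmin_le (fun j => T.dist v (f j)) j⟩
  have haway {j : ℤ} (hj : (i - j).natAbs = 1) : T.dist v (f j) = T.dist v (f i) + 1 := by
    have := hi j
    rcases hT.dist_eq_dist_add_one_of_adj v (hf.adj hj) with h | h <;> omega
  refine ⟨i, fun j => ?_⟩
  obtain rfl | ⟨i', hi', hj⟩ : j = i ∨
      ∃ i', (i - i').natAbs = 1 ∧ (j - i).natAbs = (j - i').natAbs + 1 := by
    rcases lt_trichotomy i j with h | h | h
    · exact .inr ⟨i + 1, by omega, by omega⟩
    · exact .inl h.symm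
    · exact .inr ⟨i - 1, by omega, by omega⟩
  · simp
  · have hstep := haway hi'
    have hfour := dist_add_dist_le_max hT v (f i') (f i) (f j)
    have htri := hT.connected.dist_triangle (u := v) (v := f i) (w := f j)
    simp only [hf _ _] at hfour htri
    omega

lemma eq_of_eq_endpoints (hT : T.IsTree) (hf : IsGeodesicLine T f) (he : IsGeodesicLine T e)
    {a b i : ℤ} (ha : f a = e a) (hb : f b = e b) (hai : a ≤ i) (hib : i ≤ b) : f i = e i := by
  refine eq_of_dist_add_dist_eq hT (x := f a) (y := f b) ?_ ?_ ?_
  · simp only [hf _ _]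
    omega
  · simp only [ha, hb, he _ _]
    omega
  · rw [hf, ha, he]

end IsGeodesicLine

/-- The geodesic lines `f` and `e` run together from time `0` to time `D` and separate at both ends;
in a tree this says that they meet exactly in `f '' [0, D]`. -/
structure IsOverlap (T : SimpleGraph V) (f e : ℤ → V) (D : ℤ) : Prop where
  left_geodesic : IsGeodesicLine T f
  right_geodesic : IsGeodesicLine T e
  eq_of_mem : ∀ i, 0 ≤ i → i ≤ D → f i = e i
  ne_before : f (-1) ≠ e (-1)
  ne_after : f (D + 1) ≠ e (D + 1)

namespace IsOverlap

variable {f e : ℤ → V} {D : ℤ}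

lemma comp_sub_left (h : IsOverlap T f e D) :
    IsOverlap T (fun n => f (D - n)) (fun n => e (D - n)) D where
  left_geodesic := h.left_geodesic.comp_sub_left D
  right_geodesic := h.right_geodesic.comp_sub_left D
  eq_of_mem i h0 hD := h.eq_of_mem _ (by omega) (by omega)
  ne_before := by simpa using h.ne_after
  ne_after := by simpa using h.ne_before

lemma dist_of_gt (hT : T.IsTree) (h : IsOverlap T f e D) (hD : 0 < D) {P : ℤ} (hP : D < P)
    (i : ℤ) : T.dist (f i) (e P) = (i - D).natAbs + (P - D).natAbs := by
  obtain ⟨j, hj⟩ := h.left_geodesic.exists_dist_eq_add_natAbs hT (e P)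
  have hfe (m : ℤ) (h0 : 0 ≤ m) (hm : m ≤ D) : T.dist (e P) (f m) = (P - m).natAbs := by
    rw [h.eq_of_mem m h0 hm, h.right_geodesic]
  have hlast := hfe D hD.le le_rfl
  have hprev := hfe (D - 1) (by omega) (by omega)
  have hj_ge : D ≤ j := by
    have := hj D
    have := hj (D - 1)
    omega
  have hj_le : j ≤ D := by
    by_contra! hlt
    refine h.ne_after (eq_of_adj_of_dist_eq_add_one hT (z := e P) (v := f D)
      (h.left_geodesic.adj (by omega)) ?_ ?_ ?_)
    · rw [h.eq_of_mem D hD.le le_rfl]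
      exact h.right_geodesic.adj (by omega)
    · have := hj D
      have := hj (D + 1)
      omega
    · rw [hlast, h.right_geodesic]
      omega
  have := hj i
  have := hj D
  rw [dist_comm]
  omega

lemma dist_of_neg (hT : T.IsTree) (h : IsOverlap T f e D) (hD : 0 < D) {P : ℤ} (hP : P < 0)
    (i : ℤ) : T.dist (f i) (e P) = i.natAbs + P.natAbs := by
  have := h.comp_sub_left.dist_of_gt hT hD (P := D - P) (by omega) (D - i)
  simp only [sub_sub_cancel] at this
  omega

end IsOverlap

lemma dist_le_setDiam {S : Set V} {v w : V} (hv : v ∈ S) (hw : w ∈ S) :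
    (T.dist v w : ℕ∞) ≤ setDiam T S :=
  (le_iSup₂ (f := fun u (_ : u ∈ S) => (T.dist v u : ℕ∞)) w hw).trans
    (le_iSup₂ (f := fun u (_ : u ∈ S) => ⨆ u' ∈ S, (T.dist u u' : ℕ∞)) v hv)

lemma exists_dist_eq_setDiam {S : Set V} (hpos : 0 < setDiam T S) (hfin : setDiam T S ≠ ⊤) :
    ∃ x ∈ S, ∃ y ∈ S, (T.dist x y : ℕ∞) = setDiam T S := by
  obtain ⟨N, hN⟩ := ENat.ne_top_iff_exists.mp hfin
  rw [← hN, Nat.cast_pos] at hpos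
  obtain ⟨x, hx, y, hy, hxy⟩ : ∃ x ∈ S, ∃ y ∈ S, N - 1 < T.dist x y := by
    by_contra! hle
    have : setDiam T S ≤ ((N - 1 : ℕ) : ℕ∞) :=
      iSup₂_le fun v hv => iSup₂_le fun w hw => Nat.cast_le.mpr (hle v hv w hw)
    rw [← hN, Nat.cast_le] at this
    omega
  refine ⟨x, hx, y, hy, (dist_le_setDiam hx hy).antisymm ?_⟩
  rw [← hN, Nat.cast_le]
  omega

end Tree

section Action

variable {G V : Type*} [Group G] [MulAction G V] {T : SimpleGraph V}

lemma dist_smul_le (hconn : T.Connected) (hAct : ActsByAut G T) (g : G) (v w : V) :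
    T.dist (g • v) (g • w) ≤ T.dist v w := by
  obtain ⟨p, hp⟩ := hconn.exists_walk_length_eq_dist v w
  let φ : T →g T := ⟨fun u => g • u, fun {u u'} h => hAct g u u' h⟩
  calc T.dist (g • v) (g • w) ≤ (p.map φ).length := dist_le _
    _ = T.dist v w := by rw [Walk.length_map, hp]

lemma dist_smul_smul (hconn : T.Connected) (hAct : ActsByAut G T) (g : G) (v w : V) :
    T.dist (g • v) (g • w) = T.dist v w := by
  refine le_antisymm (dist_smul_le hconn hAct g v w) ?_
  simpa using dist_smul_le hconn hAct g⁻¹ (g • v) (g • w)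

lemma smul_halfTree (hconn : T.Connected) (hAct : ActsByAut G T) (g : G) (u v : V) :
    g • halfTree T u v = halfTree T (g • u) (g • v) := by
  ext w
  rw [Set.mem_smul_set_iff_inv_smul_mem]
  change T.dist (g⁻¹ • w) u < T.dist (g⁻¹ • w) v ↔ T.dist w (g • u) < T.dist w (g • v)
  rw [← dist_smul_smul hconn hAct g, ← dist_smul_smul hconn hAct g _ v, smul_inv_smul]

lemma IsGeodesicLine.smul (hconn : T.Connected) (hAct : ActsByAut G T) {f : ℤ → V}
    (hf : IsGeodesicLine T f) (g : G) : IsGeodesicLine T fun n => g • f n :=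
  fun m n => (dist_smul_smul hconn hAct g _ _).trans (hf m n)

/-- `g` translates the line `f` by `s`, backwards when `s` is negative. -/
def Translates (g : G) (f : ℤ → V) (s : ℤ) : Prop := ∀ n, g • f n = f (n + s)

namespace Translates

variable {g : G} {f : ℤ → V} {s : ℤ}

lemma comp_add_left (h : Translates g f s) (c : ℤ) : Translates g (fun n => f (c + n)) s :=
  fun n => (h _).trans (congrArg f (by ring))

lemma comp_sub_left (h : Translates g f s) (c : ℤ) : Translates g (fun n => f (c - n)) (-s) :=
  fun n => (h _).trans (congrArg f (by ring))

lemma inv_smul (h : Translates g f s) (n : ℤ) : g⁻¹ • f n = f (n - s) := by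
  rw [inv_smul_eq_iff, h, sub_add_cancel]

lemma zpow (h : Translates g f s) (p : ℤ) : Translates (g ^ p) f (p * s) := by
  induction p with
  | zero => simp [Translates]
  | succ i ih =>
    intro n
    rw [zpow_add_one, mul_smul, h, ih]
    congr 1
    ring
  | pred i ih =>
    intro n
    rw [zpow_sub_one, mul_smul, h.inv_smul, ih]
    congr 1
    ring

lemma conj (h : Translates g f s) (c : G) :
    Translates (c * g * c⁻¹) (fun n => c • f n) s :=
  fun n => by simp only [mul_smul, inv_smul_smul, h n]

end Translates

lemma exists_dist_smul_eq_of_translates (hT : T.IsTree) (hAct : ActsByAut G T) {g : G} {f : ℤ → V}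
    {s : ℤ} (hf : IsGeodesicLine T f) (hs : s ≠ 0) (h : Translates g f s) (v : V) :
    ∃ i, T.dist v (g • v) = 2 * T.dist v (f i) + s.natAbs := by
  obtain ⟨i, hi⟩ := hf.exists_dist_eq_add_natAbs hT v
  have hg (j : ℤ) : T.dist (f (j + s)) (g • v) = T.dist v (f j) := by
    rw [← h, dist_smul_smul hT.connected hAct, dist_comm]
  have hgi : T.dist (f i) (g • v) = T.dist v (f i) + s.natAbs := by
    have := hg (i - s)
    rw [sub_add_cancel, hi] at this
    omega
  have := dist_eq_add_add hT (x := v) (y := g • v) (hf.ne (m := i) (n := i + s) (by omega))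
    (by rw [hi, hf]; omega) (by rw [hgi, hg, hf]; omega)
  rw [hf, hg] at this
  exact ⟨i, by omega⟩

lemma transLen_eq_of_translates (hT : T.IsTree) (hAct : ActsByAut G T) {g : G} {f : ℤ → V}
    {s : ℤ} (hf : IsGeodesicLine T f) (hs : s ≠ 0) (h : Translates g f s) :
    transLen T g = s.natAbs := by
  have : Nonempty V := ⟨f 0⟩
  refine le_antisymm ?_ (le_ciInf fun v => ?_)
  · calc transLen T g ≤ T.dist (f 0) (g • f 0) := ciInf_le (OrderBot.bddBelow _) _
      _ = s.natAbs := by rw [h, hf]; omega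
  · obtain ⟨i, hi⟩ := exists_dist_smul_eq_of_translates hT hAct hf hs h v
    omega

lemma axis_eq_range_of_translates (hT : T.IsTree) (hAct : ActsByAut G T) {g : G} {f : ℤ → V}
    {s : ℤ} (hf : IsGeodesicLine T f) (hs : s ≠ 0) (h : Translates g f s) :
    Axis T g = Set.range f := by
  ext v
  change T.dist v (g • v) = transLen T g ↔ _
  rw [transLen_eq_of_translates hT hAct hf hs h]
  constructor
  · intro hv
    obtain ⟨i, hi⟩ := exists_dist_smul_eq_of_translates hT hAct hf hs h v
    exact ⟨i, (hT.connected.dist_eq_zero_iff.mp (by omega)).symm⟩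
  · rintro ⟨i, rfl⟩
    rw [h, hf]
    omega

lemma exists_translates_extending (g : G) {γ : ℕ → V} {t : ℕ} (ht : 0 < t)
    (hγ : γ t = g • γ 0) : ∃ f : ℤ → V, Translates g f t ∧ ∀ m : ℕ, m ≤ t → f m = γ m := by
  have ht' : (t : ℤ) ≠ 0 := by omega
  refine ⟨fun n => g ^ (n / t) • γ (n % t).toNat, fun n => ?_, fun m hm => ?_⟩
  · simp only [Int.add_emod_right, Int.add_ediv_of_dvd_right (dvd_refl (t : ℤ)), Int.ediv_self ht',
      zpow_add_one, smul_smul, ← zpow_one_add, add_comm]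
  · rcases hm.lt_or_eq with hlt | rfl
    · simp only [← Int.natCast_ediv, ← Int.natCast_emod, Nat.div_eq_of_lt hlt,
        Nat.mod_eq_of_lt hlt, Int.toNat_natCast, Nat.cast_zero, zpow_zero, one_smul]
    · simp only [Int.ediv_self ht', Int.emod_self, Int.toNat_zero, zpow_one, hγ]

lemma isGeodesicLine_of_translates (hT : T.IsTree) (hAct : ActsByAut G T) {g : G} {f : ℤ → V}
    {t : ℕ} (ht : 0 < t) (h : Translates g f t)
    (hadj : ∀ m : ℕ, m < t → T.Adj (f m) (f (m + 1)))
    (hne : ∀ m : ℕ, m < t → f m ≠ f (m + 2)) : IsGeodesicLine T f := by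
  have hperiod (n : ℤ) : ∃ m : ℕ, m < t ∧ ∃ q : ℤ, ∀ i, f (n + i) = g ^ q • f (m + i) := by
    have hlt := Int.emod_lt_of_pos n (Int.natCast_pos.mpr ht)
    have hnonneg := Int.emod_nonneg n (Int.natCast_pos.mpr ht).ne'
    refine ⟨(n % t).toNat, by omega, n / t, fun i => ?_⟩
    rw [h.zpow, Int.toNat_of_nonneg hnonneg]
    congr 1
    linarith [Int.emod_add_ediv_mul n t]
  refine .of_nonbacktracking hT (fun n => ?_) (fun n => ?_) <;>
    obtain ⟨m, hm, q, hq⟩ := hperiod n <;> have hn := hq 0 <;> simp only [add_zero] at hn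
  · rw [hn, hq]
    exact hAct _ _ _ (hadj m hm)
  · rw [hn, hq]
    exact fun heq => hne m hm (smul_left_cancel _ heq)

/-- The geodesic from a vertex `x` of minimal displacement to `g • x` does not backtrack when it is
continued by its translate: otherwise its second vertex `y` would be moved less than `x`, or, if
`d(x, g • x) = 1`, the edge `x y` would be inverted. -/
lemma dist_smul_lt_of_adj_of_dist_lt (hT : T.IsTree) (hAct : ActsByAut G T)
    (hNoInv : NoEdgeInversion G T) {g : G} {x y : V}
    (hx : ∀ z, T.dist x (g • x) ≤ T.dist z (g • z)) (hxy : T.Adj x y)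
    (hy : T.dist y (g • x) < T.dist x (g • x)) : T.dist x (g • x) < T.dist x (g • y) := by
  by_contra! hle
  have hback := hT.dist_ne_of_adj x (hAct g x y hxy)
  have hfour := dist_add_dist_le_max hT y (g • y) x (g • x)
  rw [dist_smul_smul hT.connected hAct, dist_comm (u := g • y), dist_comm (u := y) (v := x),
    dist_eq_one_iff_adj.mpr hxy] at hfour
  have hmin := hx y
  have hgx : g • x = y := (hT.connected.dist_eq_zero_iff.mp (by omega)).symm
  have hgy : g • y = x := (hT.connected.dist_eq_zero_iff.mp (by omega)).symm
  exact hNoInv g x y hxy ⟨hgx, hgy⟩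

lemma exists_isGeodesicLine_translates (hT : T.IsTree) (hAct : ActsByAut G T)
    (hNoInv : NoEdgeInversion G T) {g : G} (hg : IsHyperbolic V g) :
    ∃ (f : ℤ → V) (s : ℤ), s ≠ 0 ∧ IsGeodesicLine T f ∧ Translates g f s := by
  have : Nonempty V := hT.connected.nonempty
  obtain ⟨x, hx⟩ : ∃ x, ∀ y, T.dist x (g • x) ≤ T.dist y (g • y) :=
    ⟨_, fun y => Function.argmin_le (fun y => T.dist y (g • y)) y⟩
  obtain ⟨w, hw, hlen⟩ := hT.connected.exists_path_of_dist x (g • x)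
  set t := T.dist x (g • x)
  have ht : 0 < t := hT.connected.pos_dist_of_ne fun h => hg ⟨x, h.symm⟩
  have hadj (m : ℕ) (hm : m < t) : T.Adj (w.getVert m) (w.getVert (m + 1)) :=
    w.adj_getVert_succ (by omega)
  have hne (m : ℕ) (hm : m + 2 ≤ t) : w.getVert m ≠ w.getVert (m + 2) := fun h => by
    have := hw.getVert_injOn (show m ≤ w.length by omega) (show m + 2 ≤ w.length by omega) h
    omega
  have hwt : w.getVert t = g • x := hlen ▸ w.getVert_length
  have hturn : w.getVert (t - 1) ≠ g • w.getVert 1 := by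
    intro h
    have hfst : T.Adj x (w.getVert 1) := by simpa using hadj 0 ht
    have htail := dist_le (w.drop 1)
    have hinit := dist_le (w.take (t - 1))
    rw [Walk.drop_length] at htail
    rw [Walk.take_length, h] at hinit
    have := dist_smul_lt_of_adj_of_dist_lt hT hAct hNoInv hx hfst (by omega)
    omega
  obtain ⟨f, hf, hfw⟩ := exists_translates_extending g ht (γ := w.getVert) (by simpa using hwt)
  refine ⟨f, t, by omega, isGeodesicLine_of_translates hT hAct ht hf ?_ ?_, hf⟩
  · intro m hm
    have := hfw (m + 1) hm
    push_cast at this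
    rw [hfw m hm.le, this]
    exact hadj m hm
  · intro m hm
    obtain hm2 | rfl : m + 2 ≤ t ∨ m = t - 1 := by omega
    · have := hfw (m + 2) hm2
      push_cast at this
      rw [hfw m hm.le, this]
      exact hne m hm2
    · have := hf (1 : ℕ)
      rw [hfw 1 ht] at this
      rw [hfw _ hm.le, show ((t - 1 : ℕ) : ℤ) + 2 = (1 : ℕ) + t by omega, ← this]
      exact hturn

lemma exists_isGeodesicLine_through (hT : T.IsTree) (hAct : ActsByAut G T)
    (hNoInv : NoEdgeInversion G T) {g : G} (hg : IsHyperbolic V g) {x y : V} (hx : x ∈ Axis T g)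
    (hy : y ∈ Axis T g) :
    ∃ (f : ℤ → V) (s : ℤ), s ≠ 0 ∧ IsGeodesicLine T f ∧ Translates g f s ∧ f 0 = x ∧
      f (T.dist x y) = y := by
  obtain ⟨f, s, hs, hf, hgf⟩ := exists_isGeodesicLine_translates hT hAct hNoInv hg
  rw [axis_eq_range_of_translates hT hAct hf hs hgf] at hx hy
  obtain ⟨⟨i, rfl⟩, ⟨j, rfl⟩⟩ := hx, hy
  rw [hf]
  rcases le_total i j with hij | hij
  · exact ⟨_, s, hs, hf.comp_add_left i, hgf.comp_add_left i, by simp, congrArg f (by omega)⟩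
  · exact ⟨_, -s, by omega, hf.comp_sub_left i, hgf.comp_sub_left i, by simp,
      congrArg f (by omega)⟩

lemma smul_mem_axis_of_commute (hconn : T.Connected) (hAct : ActsByAut G T) {a b : G}
    (hab : Commute a b) {v : V} (hv : v ∈ Axis T a) : b • v ∈ Axis T a := by
  change T.dist (b • v) (a • b • v) = transLen T a
  rw [← mul_smul, hab.eq, mul_smul, dist_smul_smul hconn hAct]
  exact hv

lemma setDiam_axis_inter_axis_eq_top_of_commute (hT : T.IsTree) (hAct : ActsByAut G T)
    (hNoInv : NoEdgeInversion G T) {a b : G} (hb : IsHyperbolic V b) (hab : Commute a b)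
    (hne : (Axis T a ∩ Axis T b).Nonempty) : setDiam T (Axis T a ∩ Axis T b) = ⊤ := by
  obtain ⟨x, hxa, hxb⟩ := hne
  obtain ⟨f, s, hs, hf, hbf, rfl, -⟩ := exists_isGeodesicLine_through hT hAct hNoInv hb hxb hxb
  refine ENat.eq_top_iff_forall_ge.mpr fun n => ?_
  have hn : b ^ n • f 0 ∈ Axis T a ∩ Axis T b :=
    ⟨smul_mem_axis_of_commute hT.connected hAct (hab.pow_right n) hxa,
      smul_mem_axis_of_commute hT.connected hAct (Commute.self_pow b n) hxb⟩
  refine le_trans (Nat.cast_le.mpr ?_) (dist_le_setDiam ⟨hxa, hxb⟩ hn)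
  rw [← zpow_natCast, hbf.zpow, hf, zero_add, zero_sub, Int.natAbs_neg, Int.natAbs_mul,
    Int.natAbs_natCast]
  exact Nat.le_mul_of_pos_right n (Int.natAbs_pos.mpr hs)

lemma commute_of_acylindrical {k : ℕ} (hAcyl : AcylindricalAction T G k) {a b : G}
    {f e : ℤ → V} {s t D : ℤ} (hf : IsGeodesicLine T f) (hfe : ∀ i, 0 ≤ i → i ≤ D → f i = e i)
    (ha : Translates a f s) (hb : Translates b e t) (hD : s.natAbs + t.natAbs + k < D) :
    Commute a b := by
  have hfix (i : ℤ) (hi : max 0 (-s) + max 0 (-t) ≤ i) (hiD : i + max 0 s + max 0 t ≤ D) :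
      f i ∈ Fixed V ((b * a)⁻¹ * (a * b)) := by
    change ((b * a)⁻¹ * (a * b)) • f i = f i
    rw [mul_smul, inv_smul_eq_iff, mul_smul, mul_smul, hfe i (by omega) (by omega), hb,
      ← hfe (i + t) (by omega) (by omega), ha, ← hfe i (by omega) (by omega), ha,
      hfe (i + s) (by omega) (by omega), hb, ← hfe _ (by omega) (by omega)]
    congr 1
    ring
  by_contra hne
  have hne_one : (b * a)⁻¹ * (a * b) ≠ 1 := fun h => hne (inv_mul_eq_one.mp h).symm
  have hi := hfix (max 0 (-s) + max 0 (-t)) le_rfl (by omega)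
  have hj := hfix (max 0 (-s) + max 0 (-t) + (k + 1)) (by omega) (by omega)
  have hdist := (dist_le_setDiam hi hj).trans (hAcyl _ hne_one ⟨_, hi⟩)
  rw [hf, Nat.cast_le] at hdist
  omega

lemma setDiam_axis_inter_axis_le (hT : T.IsTree) (hAct : ActsByAut G T)
    (hNoInv : NoEdgeInversion G T) {k : ℕ} (hAcyl : AcylindricalAction T G k) {a b : G}
    (ha : IsHyperbolic V a) (hb : IsHyperbolic V b)
    (hfin : setDiam T (Axis T a ∩ Axis T b) ≠ ⊤) :
    setDiam T (Axis T a ∩ Axis T b) ≤ transLen T a + transLen T b + k := by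
  refine iSup₂_le fun x hx => iSup₂_le fun y hy => ?_
  by_contra! hlt
  obtain ⟨f, s, hs, hf, haf, hf0, hfD⟩ :=
    exists_isGeodesicLine_through hT hAct hNoInv ha hx.1 hy.1
  obtain ⟨e, t, ht, he, hbe, he0, heD⟩ :=
    exists_isGeodesicLine_through hT hAct hNoInv hb hx.2 hy.2
  rw [transLen_eq_of_translates hT hAct hf hs haf, transLen_eq_of_translates hT hAct he ht hbe]
    at hlt
  refine hfin (setDiam_axis_inter_axis_eq_top_of_commute hT hAct hNoInv hb ?_ ⟨x, hx⟩)
  exact commute_of_acylindrical hAcyl hf (D := T.dist x y)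
    (fun i h0 hD => hf.eq_of_eq_endpoints hT he (hf0.trans he0.symm) (hfD.trans heD.symm) h0 hD)
    haf hbe (by exact_mod_cast hlt)

end Action

section PingPong

universe u

variable {G : Type u} {V : Type*} [Group G] [MulAction G V] {T : SimpleGraph V}

lemma natAbs_sub_sign_add_one {n : ℤ} (hn : n ≠ 0) : (n - n.sign).natAbs + 1 = n.natAbs := by
  rcases hn.lt_or_gt with h | h
  · rw [Int.sign_eq_neg_one_of_neg h]
    omega
  · rw [Int.sign_eq_one_of_pos h]
    omega

/-- Ping-pong: `a i` carries the complement of the half-tree on the repelling side of `f i 0` onto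
the half-tree on the attracting side of `f i (s i)`. -/
lemma injective_freeGroup_lift_of_dist_eq {ι : Type u} [Nontrivial ι]
    (hT : T.IsTree) (hAct : ActsByAut G T) {a : ι → G} {f : ι → ℤ → V} {s : ι → ℤ}
    (hs : ∀ i, s i ≠ 0) (hf : ∀ i, IsGeodesicLine T (f i)) (ha : ∀ i, Translates (a i) (f i) (s i))
    (hfar : Pairwise fun i j =>
      ∃ L, ∀ m n, T.dist (f i m) (f j n) = m.natAbs + L + n.natAbs) :
    Function.Injective (FreeGroup.lift a) := by
  have hsign (i : ι) : (s i).sign.natAbs = 1 := Int.natAbs_sign_of_ne_zero (hs i)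
  have hback (i : ι) := natAbs_sub_sign_add_one (hs i)
  have hX_adj (i : ι) : T.Adj (f i (s i)) (f i (s i - (s i).sign)) :=
    (hf i).adj (by rw [sub_sub_cancel, hsign])
  have hY_adj (i : ι) : T.Adj (f i (-(s i).sign)) (f i 0) :=
    (hf i).adj (by rw [sub_zero, Int.natAbs_neg, hsign])
  refine FreeGroup.injective_lift_of_ping_pong a
    (fun i => halfTree T (f i (s i)) (f i (s i - (s i).sign)))
    (fun i => halfTree T (f i (-(s i).sign)) (f i 0)) (fun i => ⟨f i (s i), ?_⟩)
    (fun i j hij => disjoint_halfTree hT (hX_adj i) (hX_adj j) ?_)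
    (fun i j hij => disjoint_halfTree hT (hY_adj i) (hY_adj j) ?_)
    (fun i j => disjoint_halfTree hT (hX_adj i) (hY_adj j) ?_)
    (fun i => ?_) (fun i => ?_)
  · change T.dist _ _ < T.dist _ _
    rw [hf, hf]
    have := hsign i
    omega
  · obtain ⟨L, hL⟩ := hfar hij
    have := hback i
    have := hback j
    rw [hL, hL]
    omega
  · obtain ⟨L, hL⟩ := hfar hij
    have := hsign i
    have := hsign j
    rw [hL, hL]
    omega
  · have := hsign i
    have := hsign j
    have := hback i
    obtain rfl | hij := eq_or_ne i j
    · rw [hf, hf]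
      omega
    · obtain ⟨L, hL⟩ := hfar hij
      rw [hL, hL]
      omega
  · rw [compl_halfTree hT (hY_adj i), smul_halfTree hT.connected hAct, ha, ha, zero_add,
      neg_add_eq_sub]
  · rw [compl_halfTree hT (hX_adj i), smul_halfTree hT.connected hAct, Pi.inv_apply,
      (ha i).inv_smul, (ha i).inv_smul, sub_self, sub_sub_cancel_left]

lemma freelyGenerates_of_dist_eq (hT : T.IsTree) (hAct : ActsByAut G T)
    {a b : G} {f e : ℤ → V} {s t : ℤ} {L : ℕ} (hs : s ≠ 0) (ht : t ≠ 0)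
    (hf : IsGeodesicLine T f) (he : IsGeodesicLine T e) (ha : Translates a f s)
    (hb : Translates b e t) (hfe : ∀ m n, T.dist (f m) (e n) = m.natAbs + L + n.natAbs) :
    FreelyGeneratesFreeSubgroup a b := by
  have hlift : Function.Injective
      (FreeGroup.lift fun i : ULift.{u} Bool => if i.down then a else b) := by
    refine injective_freeGroup_lift_of_dist_eq hT hAct (f := fun i => if i.down then f else e)
      (s := fun i => if i.down then s else t) ?_ ?_ ?_ ?_
    · rintro ⟨_ | _⟩ <;> assumption
    · rintro ⟨_ | _⟩ <;> assumption
    · rintro ⟨_ | _⟩ <;> assumption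
    · rintro ⟨_ | _⟩ ⟨_ | _⟩ hij
      · exact absurd rfl hij
      · exact ⟨L, fun m n => dist_comm.trans ((hfe n m).trans (by omega))⟩
      · exact ⟨L, hfe⟩
      · exact absurd rfl hij
  have hcomp : FreeGroup.lift (fun i : Bool => if i then a else b) =
      (FreeGroup.lift fun i : ULift.{u} Bool => if i.down then a else b).comp
        (FreeGroup.freeGroupCongr Equiv.ulift.{u}.symm).toMonoidHom := by
    ext i
    simp
  rw [FreelyGeneratesFreeSubgroup, hcomp]
  exact hlift.comp (FreeGroup.freeGroupCongr Equiv.ulift.symm).injective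

end PingPong

section FreeSubgroups

variable {G V : Type*} [Group G] [MulAction G V] {T : SimpleGraph V}

/-- The bridge from `f` to `c • f` runs along `e`, from `e D` to `e P`. -/
lemma IsOverlap.dist_smul_of_gt (hT : T.IsTree) (hAct : ActsByAut G T) {f e : ℤ → V} {D P : ℤ}
    (h : IsOverlap T f e D) (hD : 0 < D) {c : G} (hc : Translates c e P) (hP : D < P) (m n : ℤ) :
    T.dist (f m) (c • f n) = (m - D).natAbs + (P - D).natAbs + n.natAbs := by
  have hfD : f D = e D := h.eq_of_mem D hD.le le_rfl
  have hcf0 : c • f 0 = e P := by rw [h.eq_of_mem 0 le_rfl hD.le, hc, zero_add]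
  have hceD : c • e (D - P) = e D := by rw [hc, sub_add_cancel]
  have hleft (m : ℤ) : T.dist (f m) (e D) = (m - D).natAbs := by rw [← hfD, h.left_geodesic]
  have hright (n : ℤ) : T.dist (e P) (c • f n) = n.natAbs := by
    rw [← hcf0, dist_smul_smul hT.connected hAct, h.left_geodesic]
    omega
  have hmid : T.dist (e D) (e P) = (P - D).natAbs := by
    rw [h.right_geodesic]
    omega
  have hfP : T.dist (f m) (e P) = T.dist (f m) (e D) + T.dist (e D) (e P) := by
    rw [h.dist_of_gt hT hD hP, hleft, hmid]
  have hcfD : T.dist (e D) (c • f n) = T.dist (e D) (e P) + T.dist (e P) (c • f n) := by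
    rw [← hceD, dist_smul_smul hT.connected hAct, dist_comm, h.dist_of_neg hT hD (by omega), hceD,
      hmid, hright]
    omega
  rw [dist_eq_add_add hT (h.right_geodesic.ne hP.ne) hfP hcfD, hleft, hmid, hright]

lemma freelyGenerates_conj_of_isOverlap (hT : T.IsTree) (hAct : ActsByAut G T) {f e : ℤ → V}
    {D s P : ℤ} (h : IsOverlap T f e D) (hD : 0 < D) {a c : G} (hs : s ≠ 0)
    (ha : Translates a f s) (hc : Translates c e P) (hP : D < P.natAbs) :
    FreelyGeneratesFreeSubgroup a (c * a * c⁻¹) := by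
  wlog hpos : 0 ≤ P generalizing f e s P
  · exact this h.comp_sub_left (neg_ne_zero.mpr hs) (ha.comp_sub_left D) (hc.comp_sub_left D)
      (by omega) (by omega)
  refine freelyGenerates_of_dist_eq hT hAct (L := (P - D).natAbs) hs hs
    (h.left_geodesic.comp_add_left D) (h.left_geodesic.smul hT.connected hAct c)
    (ha.comp_add_left D) (ha.conj c) fun m n => ?_
  rw [h.dist_smul_of_gt hT hAct hD hc (by omega), add_sub_cancel_left]

lemma exists_isOverlap (hT : T.IsTree) (hAct : ActsByAut G T) (hNoInv : NoEdgeInversion G T)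
    {a b : G} (ha : IsHyperbolic V a) (hb : IsHyperbolic V b)
    (hpos : 0 < setDiam T (Axis T a ∩ Axis T b)) (hfin : setDiam T (Axis T a ∩ Axis T b) ≠ ⊤) :
    ∃ (f e : ℤ → V) (s t : ℤ) (D : ℕ), s ≠ 0 ∧ t ≠ 0 ∧ Translates a f s ∧ Translates b e t ∧
      (D : ℕ∞) = setDiam T (Axis T a ∩ Axis T b) ∧ IsOverlap T f e D := by
  obtain ⟨x, hx, y, hy, hxy⟩ := exists_dist_eq_setDiam hpos hfin
  obtain ⟨f, s, hs, hf, haf, hf0, hfD⟩ :=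
    exists_isGeodesicLine_through hT hAct hNoInv ha hx.1 hy.1
  obtain ⟨e, t, ht, he, hbe, he0, heD⟩ :=
    exists_isGeodesicLine_through hT hAct hNoInv hb hx.2 hy.2
  have hmeet {i : ℤ} (hi : f i = e i) {v : V} (hv : v ∈ Axis T a ∩ Axis T b) :
      T.dist v (f i) ≤ T.dist x y := by
    have hmem : f i ∈ Axis T a ∩ Axis T b := by
      rw [axis_eq_range_of_translates hT hAct hf hs haf,
        axis_eq_range_of_translates hT hAct he ht hbe]
      exact ⟨⟨i, rfl⟩, ⟨i, hi.symm⟩⟩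
    exact Nat.cast_le.mp ((dist_le_setDiam hv hmem).trans hxy.ge)
  refine ⟨f, e, s, t, T.dist x y, hs, ht, haf, hbe, hxy, hf, he, fun i h0 hD =>
    hf.eq_of_eq_endpoints hT he (hf0.trans he0.symm) (hfD.trans heD.symm) h0 hD, fun h => ?_,
    fun h => ?_⟩
  · have := hmeet h hy
    rw [dist_comm, ← hfD, hf, hfD] at this
    omega
  · have := hmeet h hx
    rw [← hf0, hf, hf0] at this
    omega

lemma freelyGenerates_conj_zpow (hT : T.IsTree) (hAct : ActsByAut G T)
    (hNoInv : NoEdgeInversion G T) {a b : G} (ha : IsHyperbolic V a) (hb : IsHyperbolic V b)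
    (hpos : 0 < setDiam T (Axis T a ∩ Axis T b)) {p : ℤ}
    (hp : setDiam T (Axis T a ∩ Axis T b) < (p.natAbs * transLen T b : ℕ)) :
    FreelyGeneratesFreeSubgroup a (b ^ p * a * (b ^ p)⁻¹) := by
  obtain ⟨f, e, s, t, D, hs, ht, haf, hbe, hD, h⟩ :=
    exists_isOverlap hT hAct hNoInv ha hb hpos hp.ne_top
  rw [transLen_eq_of_translates hT hAct h.right_geodesic ht hbe, ← hD, Nat.cast_lt,
    ← Int.natAbs_mul] at hp
  rw [← hD, Nat.cast_pos] at hpos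
  exact freelyGenerates_conj_of_isOverlap hT hAct h (by omega) hs haf (hbe.zpow p) (by omega)

lemma freelyGenerates_conj_zpow_of_transLen_le (hT : T.IsTree) (hAct : ActsByAut G T)
    (hNoInv : NoEdgeInversion G T) {k : ℕ} (hAcyl : AcylindricalAction T G k) {a b : G}
    (ha : IsHyperbolic V a) (hb : IsHyperbolic V b)
    (hfin : setDiam T (Axis T a ∩ Axis T b) ≠ ⊤)
    (hbig : ((3 * k : ℕ) : ℕ∞) < setDiam T (Axis T a ∩ Axis T b))
    (hle : transLen T a ≤ transLen T b) {p : ℤ} (hp : 3 ≤ p.natAbs) :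
    FreelyGeneratesFreeSubgroup a (b ^ p * a * (b ^ p)⁻¹) := by
  refine freelyGenerates_conj_zpow hT hAct hNoInv ha hb (pos_of_gt hbig) ?_
  have hbound := setDiam_axis_inter_axis_le hT hAct hNoInv hAcyl ha hb hfin
  obtain ⟨N, hN⟩ := ENat.ne_top_iff_exists.mp hfin
  rw [← hN] at hbig hbound ⊢
  norm_cast at hbig hbound ⊢
  calc N < 3 * transLen T b := by omega
    _ ≤ p.natAbs * transLen T b := Nat.mul_le_mul_right _ hp

end FreeSubgroups

end TreeAction

/-- Which alternative holds does not depend on `p`: it is the one that conjugates by powers of the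
element with the larger translation length. -/
theorem statement3_general {G V : Type*} [Group G] [MulAction G V] (T : SimpleGraph V)
    (hT : T.IsTree) (hAct : ActsByAut G T) (hNoInv : NoEdgeInversion G T)
    (k : ℕ) (hAcyl : AcylindricalAction T G k)
    (h1 h2 : G) (hh1 : IsHyperbolic V h1) (hh2 : IsHyperbolic V h2)
    (hfin : setDiam T (Axis T h1 ∩ Axis T h2) ≠ ⊤)
    (hbig : ((3 * k : ℕ) : ℕ∞) < setDiam T (Axis T h1 ∩ Axis T h2)) :
    (∀ p : ℤ, 3 ≤ p.natAbs → FreelyGeneratesFreeSubgroup h1 (h2 ^ p * h1 * (h2 ^ p)⁻¹)) ∨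
      ∀ p : ℤ, 3 ≤ p.natAbs → FreelyGeneratesFreeSubgroup h2 (h1 ^ p * h2 * (h1 ^ p)⁻¹) := by
  rcases le_total (transLen T h1) (transLen T h2) with hle | hle
  · exact .inl fun p => TreeAction.freelyGenerates_conj_zpow_of_transLen_le hT hAct hNoInv hAcyl
      hh1 hh2 hfin hbig hle
  · rw [Set.inter_comm] at hfin hbig
    exact .inr fun p => TreeAction.freelyGenerates_conj_zpow_of_transLen_le hT hAct hNoInv hAcyl
      hh2 hh1 hfin hbig hle

/-- If `G` acts `k`-acylindrically without edge inversions on a simplicial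
tree, `h1, h2` are hyperbolic with distinct axes and the intersection of the axes has
finite diameter strictly greater than `3k`, then for every integer `p ≥ 3` either `h1` and
`h2^p * h1 * h2^(-p)`, or `h2` and `h1^p * h2 * h1^(-p)`, freely generate a rank 2 free
subgroup of `G`. -/
theorem statement3 {G V : Type*} [Group G] [MulAction G V] (T : SimpleGraph V)
    (hT : T.IsTree) (hAct : ActsByAut G T) (hNoInv : NoEdgeInversion G T)
    (k : ℕ) (hAcyl : AcylindricalAction T G k)
    (h1 h2 : G) (hh1 : IsHyperbolic V h1) (hh2 : IsHyperbolic V h2)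
    (haxes : Axis T h1 ≠ Axis T h2)
    (hfin : setDiam T (Axis T h1 ∩ Axis T h2) ≠ ⊤)
    (hbig : ((3 * k : ℕ) : ℕ∞) < setDiam T (Axis T h1 ∩ Axis T h2))
    (p : ℕ) (hp : 3 ≤ p) :
    FreelyGeneratesFreeSubgroup h1 (h2 ^ p * h1 * (h2 ^ p)⁻¹) ∨
      FreelyGeneratesFreeSubgroup h2 (h1 ^ p * h2 * (h1 ^ p)⁻¹) := by
  simpa only [zpow_natCast] using
    (statement3_general T hT hAct hNoInv k hAcyl h1 h2 hh1 hh2 hfin hbig).imp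
      (fun h => h p hp) fun h => h p hp
end

section
/- Let G be a group acting without edge inversions on a simplicial tree T, and let h1, h2 ∈ G be hyperbolic elements with Axis(h1) ≠ Axis(h2). Then either the pair {h1, h2} or the pair {h1^{−1}, h2} freely generates a rank 2 free subsemigroup of G. -/
open SimpleGraph Pointwise

/-!
A hyperbolic `h` without inverted edges translates a bi-infinite non-backtracking path `f`, whose
vertices are its axis. Removing the edges at a vertex `f m` leaves one half-tree in front of `f m`
and one behind it, and `h` maps everything that is not behind `f m` to the front of `f m`.

Two distinct axes are joined by a shortest path, or else meet and branch off at a vertex. After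
possibly reversing one of them, the two forward half-trees at the ends of the joining path (or at
the branching vertex) are disjoint, and neither meets the half-tree behind the other end. So each
of the two elements maps both forward half-trees into its own one, and ping-pong applies.
-/

section FreeSubsemigroup

theorem freeMonoid_lift_injective_of_ping_pong {ι M α : Type*} [Nontrivial ι]
    [LeftCancelMonoid M] [MulAction M α] (c : ι → M) (X : ι → Set α)
    (hne : ∀ i, (X i).Nonempty) (hdisj : ∀ i j, i ≠ j → Disjoint (X i) (X j))
    (hmap : ∀ i j, ∀ x ∈ X j, c i • x ∈ X i) :
    Function.Injective (FreeMonoid.lift c) := by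
  have hword : ∀ w : FreeMonoid ι, ∀ i j, ∀ x ∈ X j,
      FreeMonoid.lift c (FreeMonoid.of i * w) • x ∈ X i := by
    intro w
    induction w using FreeMonoid.inductionOn' with
    | one => simpa using hmap
    | of_mul k w ih =>
      intro i j x hx
      rw [map_mul, FreeMonoid.lift_eval_of, mul_smul]
      exact hmap i k _ (ih k j x hx)
  have hne_one : ∀ i w, FreeMonoid.lift c (FreeMonoid.of i * w) ≠ 1 := by
    intro i w h
    obtain ⟨j, hji⟩ := exists_ne i
    obtain ⟨x, hx⟩ := hne j
    have hx' := hword w i j x hx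
    rw [h, one_smul] at hx'
    exact Set.disjoint_left.1 (hdisj j i hji) hx hx'
  intro w w' h
  induction w using FreeMonoid.inductionOn' generalizing w' with
  | one =>
    cases w' using FreeMonoid.casesOn with
    | one => rfl
    | of_mul j w' => exact absurd h.symm (hne_one j w')
  | of_mul i w ih =>
    cases w' using FreeMonoid.casesOn with
    | one => exact absurd h (hne_one i w)
    | of_mul j w' =>
      obtain ⟨x, hx⟩ := hne i
      have hij : i = j := by
        by_contra hij
        exact Set.disjoint_left.1 (hdisj i j hij) (hword w i i x hx) (h ▸ hword w' j i x hx)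
      subst hij
      rw [map_mul, map_mul, mul_right_inj] at h
      rw [ih h]

theorem freeMonoid_lift_inv {ι G : Type*} [Group G] (c : ι → G) (w : FreeMonoid ι) :
    FreeMonoid.lift (fun i => (c i)⁻¹) w = (FreeMonoid.lift c w.reverse)⁻¹ := by
  induction w using FreeMonoid.inductionOn' with
  | one => exact inv_one.symm
  | of_mul i w ih => simp [FreeMonoid.reverse_mul, ih]

namespace FreelyGeneratesFreeSubsemigroup

theorem symm {M : Type*} [Monoid M] {a b : M} (h : FreelyGeneratesFreeSubsemigroup a b) :
    FreelyGeneratesFreeSubsemigroup b a := by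
  have hswap : FreeMonoid.lift (fun i : Bool => if i then b else a) =
      (FreeMonoid.lift (fun i : Bool => if i then a else b)).comp
        (FreeMonoid.freeMonoidCongr Equiv.boolNot).toMonoidHom :=
    FreeMonoid.hom_eq (by simp)
  rw [FreelyGeneratesFreeSubsemigroup, hswap]
  exact h.comp (FreeMonoid.freeMonoidCongr Equiv.boolNot).injective

variable {G : Type*} [Group G] {a b : G}

theorem inv (h : FreelyGeneratesFreeSubsemigroup a b) :
    FreelyGeneratesFreeSubsemigroup a⁻¹ b⁻¹ := by
  intro w w' hw
  simp only [← apply_ite (fun g : G => g⁻¹), freeMonoid_lift_inv, inv_inj] at hw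
  simpa using congrArg FreeMonoid.reverse (h hw)

theorem ne (h : FreelyGeneratesFreeSubsemigroup a b) : a ≠ b := by
  rintro rfl
  have : FreeMonoid.of true = FreeMonoid.of false := h (by simp)
  simpa using FreeMonoid.of_injective this

theorem inv_ne (h : FreelyGeneratesFreeSubsemigroup a b) : a⁻¹ ≠ b := by
  rintro rfl
  have : FreeMonoid.of true * FreeMonoid.of false = 1 := h (by simp)
  simpa using congrArg FreeMonoid.length this

end FreelyGeneratesFreeSubsemigroup

end FreeSubsemigroup

section HalfTree

variable {V : Type*} {T : SimpleGraph V} {u v w : V}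

/-- The vertices strictly closer to `v` than to `u`. For adjacent vertices `u`, `v` of a tree this
is the component containing `v` of the tree with the edge `uv` removed. -/
def halfTree (T : SimpleGraph V) (u v : V) : Set V := {x | T.dist x v < T.dist x u}

theorem mem_halfTree {x : V} : x ∈ halfTree T u v ↔ T.dist x v < T.dist x u := Iff.rfl

theorem right_mem_halfTree (huv : T.Adj u v) : v ∈ halfTree T u v := by
  rw [mem_halfTree, SimpleGraph.dist_self, SimpleGraph.dist_comm, dist_eq_one_iff_adj.2 huv]
  exact one_pos

theorem compl_halfTree (hT : T.IsTree) (huv : T.Adj u v) :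
    (halfTree T u v)ᶜ = halfTree T v u := by
  ext x
  have := hT.dist_ne_of_adj x huv
  rw [Set.mem_compl_iff, mem_halfTree, mem_halfTree]
  omega

theorem exists_isPath_penultimate_of_mem_halfTree (hT : T.IsTree) (hvu : T.Adj v u) {x : V}
    (hx : x ∈ halfTree T v u) : ∃ p : T.Walk x v, p.IsPath ∧ p.penultimate = u := by
  obtain ⟨p, hp⟩ := hT.1.exists_walk_length_eq_dist x u
  have hdist : T.dist x v = T.dist x u + 1 := by
    have := hT.dist_eq_dist_add_one_of_adj x hvu
    rw [mem_halfTree] at hx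
    omega
  refine ⟨p.concat hvu.symm, Walk.isPath_of_length_eq_dist _ ?_, by simp⟩
  rw [Walk.length_concat, hp, hdist]

theorem disjoint_halfTree (hT : T.IsTree) (hvu : T.Adj v u) (hvw : T.Adj v w) (huw : u ≠ w) :
    Disjoint (halfTree T v u) (halfTree T v w) := by
  refine Set.disjoint_left.2 fun x hxu hxw => huw ?_
  obtain ⟨p, hp, rfl⟩ := exists_isPath_penultimate_of_mem_halfTree hT hvu hxu
  obtain ⟨q, hq, rfl⟩ := exists_isPath_penultimate_of_mem_halfTree hT hvw hxw
  rw [(hT.existsUnique_path x v).unique hp hq]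

theorem halfTree_subset_halfTree (hT : T.IsTree) (huv : T.Adj u v) (hvw : T.Adj v w)
    (huw : u ≠ w) : halfTree T v w ⊆ halfTree T u v := by
  rw [← compl_halfTree hT huv.symm]
  exact (disjoint_halfTree hT huv.symm hvw huw).subset_compl_left

theorem disjoint_halfTree_of_isPath (hT : T.IsTree) {v' w' : V} (p : T.Walk v w)
    (hp : p.IsPath) (hv : T.Adj v v') (hw : T.Adj w w') (hv' : v' ∉ p.support)
    (hw' : w' ∉ p.support) (hne : v' ≠ w') :
    Disjoint (halfTree T v v') (halfTree T w w') := by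
  induction p generalizing v' with
  | nil => exact disjoint_halfTree hT hv hw hne
  | @cons v u w hvu p ih =>
    rw [Walk.cons_isPath_iff] at hp
    rw [Walk.support_cons, List.mem_cons, not_or] at hv' hw'
    have hv'u : v' ≠ u := fun h => hv'.2 (h ▸ p.start_mem_support)
    exact (ih hp.1 hvu.symm hw hp.2 hw'.2 (Ne.symm hw'.1)).mono_left
      (halfTree_subset_halfTree hT hvu.symm hv (Ne.symm hv'u))

theorem exists_isPath_between (hT : T.Connected) {A B : Set V} (hA : A.Nonempty)
    (hB : B.Nonempty) : ∃ a ∈ A, ∃ b ∈ B, ∃ p : T.Walk a b, p.IsPath ∧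
      (∀ x ∈ p.support, x ∈ A → x = a) ∧ ∀ x ∈ p.support, x ∈ B → x = b := by
  obtain ⟨⟨a, b⟩, ⟨ha, hb⟩, hmin⟩ := exists_minimalFor_of_wellFoundedLT
    (· ∈ A ×ˢ B) (fun x : V × V => T.dist x.1 x.2) (hA.prod hB)
  replace hmin : ∀ a' ∈ A, ∀ b' ∈ B, T.dist a b ≤ T.dist a' b' := fun a' ha' b' hb' =>
    (le_total _ _).elim id (hmin (j := (a', b')) ⟨ha', hb'⟩)
  obtain ⟨p, hp, hlen⟩ := hT.exists_path_of_dist a b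
  classical
  refine ⟨a, ha, b, hb, p, hp, fun x hx hxA => ?_, fun x hx hxB => ?_⟩ <;> by_contra hne
  · have hlt := Walk.length_dropUntil_lt_length hx hne
    have hle := (hmin x hxA b hb).trans (dist_le (p.dropUntil x hx))
    omega
  · have hlt := Walk.length_takeUntil_lt_length hx hne
    have hle := (hmin a ha x hxB).trans (dist_le (p.takeUntil x hx))
    omega

end HalfTree

section GroupAction

variable {G V : Type*} [Group G] [MulAction G V] {T : SimpleGraph V}

theorem ActsByAut.adj_smul_iff (hAct : ActsByAut G T) (g : G) {v w : V} :
    T.Adj (g • v) (g • w) ↔ T.Adj v w :=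
  ⟨fun h => by simpa using hAct g⁻¹ _ _ h, hAct g v w⟩

theorem ActsByAut.smul_mem_halfTree_iff (hAct : ActsByAut G T) (g : G) {u v x : V} :
    g • x ∈ halfTree T (g • u) (g • v) ↔ x ∈ halfTree T u v := by
  simp only [mem_halfTree, hAct.dist_smul]

/-- `h` translates the bi-infinite non-backtracking path `f` in the direction of increasing
indices. In a tree such a path is a line. -/
structure TranslatesAlong (T : SimpleGraph V) (h : G) (f : ℤ → V) : Prop where
  adj : ∀ n, T.Adj (f n) (f (n + 1))
  ne_add_two : ∀ n, f n ≠ f (n + 2)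
  exists_smul_eq : ∃ t : ℕ, 0 < t ∧ ∀ n, h • f n = f (n + t)

namespace TranslatesAlong

variable {g h : G} {e f : ℤ → V}

theorem adj_sub_one (hf : TranslatesAlong T h f) (n : ℤ) : T.Adj (f n) (f (n - 1)) := by
  simpa using (hf.adj (n - 1)).symm

theorem sub_one_ne_add_one (hf : TranslatesAlong T h f) (n : ℤ) : f (n - 1) ≠ f (n + 1) := by
  convert hf.ne_add_two (n - 1) using 2
  ring

theorem inv (hf : TranslatesAlong T h f) : TranslatesAlong T h⁻¹ (fun n => f (-n)) where
  adj n := by simpa only [neg_add'] using hf.adj_sub_one (-n)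
  ne_add_two n := by
    convert (hf.ne_add_two (-(n + 2))).symm using 2
    ring
  exists_smul_eq := by
    obtain ⟨t, ht, hsmul⟩ := hf.exists_smul_eq
    refine ⟨t, ht, fun n => ?_⟩
    rw [inv_smul_eq_iff, hsmul]
    congr 1
    ring

theorem antitone_halfTree (hT : T.IsTree) (hf : TranslatesAlong T h f) :
    Antitone fun n => halfTree T (f n) (f (n + 1)) := by
  refine antitone_int_of_succ_le fun n => ?_
  refine halfTree_subset_halfTree hT (hf.adj n) (hf.adj (n + 1)) ?_
  rw [add_assoc]
  exact hf.ne_add_two n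

theorem smul_mem_halfTree (hT : T.IsTree) (hAct : ActsByAut G T) (hf : TranslatesAlong T h f)
    (m : ℤ) {x : V} (hx : x ∉ halfTree T (f m) (f (m - 1))) :
    h • x ∈ halfTree T (f m) (f (m + 1)) := by
  obtain ⟨t, ht, hsmul⟩ := hf.exists_smul_eq
  rw [← Set.mem_compl_iff, compl_halfTree hT (hf.adj_sub_one m),
    ← hAct.smul_mem_halfTree_iff h, hsmul, hsmul] at hx
  refine hf.antitone_halfTree hT (show m ≤ m - 1 + t by omega) ?_
  convert hx using 3
  ring

theorem freelyGenerates_of_disjoint_halfTree (hT : T.IsTree) (hAct : ActsByAut G T)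
    (he : TranslatesAlong T g e) (hf : TranslatesAlong T h f) (m n : ℤ)
    (hff : Disjoint (halfTree T (e m) (e (m + 1))) (halfTree T (f n) (f (n + 1))))
    (hfb : Disjoint (halfTree T (e m) (e (m + 1))) (halfTree T (f n) (f (n - 1))))
    (hbf : Disjoint (halfTree T (e m) (e (m - 1))) (halfTree T (f n) (f (n + 1)))) :
    FreelyGeneratesFreeSubsemigroup g h := by
  have hself {k : G} {l : ℤ → V} (hl : TranslatesAlong T k l) (i : ℤ) :
      Disjoint (halfTree T (l i) (l (i + 1))) (halfTree T (l i) (l (i - 1))) :=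
    disjoint_halfTree hT (hl.adj i) (hl.adj_sub_one i) (hl.sub_one_ne_add_one i).symm
  refine freeMonoid_lift_injective_of_ping_pong _ (fun i : Bool =>
    if i then halfTree T (e m) (e (m + 1)) else halfTree T (f n) (f (n + 1))) ?_ ?_ ?_
  · rintro (_ | _)
    exacts [⟨_, right_mem_halfTree (hf.adj n)⟩, ⟨_, right_mem_halfTree (he.adj m)⟩]
  · rintro (_ | _) (_ | _) hij
    exacts [absurd rfl hij, hff.symm, hff, absurd rfl hij]
  · rintro (_ | _) (_ | _) x hx
    · exact hf.smul_mem_halfTree hT hAct n (Set.disjoint_left.1 (hself hf n) hx)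
    · exact hf.smul_mem_halfTree hT hAct n (Set.disjoint_left.1 hfb hx)
    · exact he.smul_mem_halfTree hT hAct m (Set.disjoint_right.1 hbf hx)
    · exact he.smul_mem_halfTree hT hAct m (Set.disjoint_left.1 (hself he m) hx)

theorem freelyGenerates_of_disjoint_range (hT : T.IsTree) (hAct : ActsByAut G T)
    (he : TranslatesAlong T g e) (hf : TranslatesAlong T h f)
    (hdisj : Disjoint (Set.range e) (Set.range f)) : FreelyGeneratesFreeSubsemigroup g h := by
  obtain ⟨_, ⟨m, rfl⟩, _, ⟨n, rfl⟩, p, hp, hpe, hpf⟩ :=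
    exists_isPath_between hT.1 (Set.range_nonempty e) (Set.range_nonempty f)
  have hdisj' {i j : ℤ} (hi : T.Adj (e m) (e i)) (hj : T.Adj (f n) (f j)) :
      Disjoint (halfTree T (e m) (e i)) (halfTree T (f n) (f j)) :=
    disjoint_halfTree_of_isPath hT p hp hi hj
      (fun hmem => hi.ne' (hpe _ hmem (Set.mem_range_self i)))
      (fun hmem => hj.ne' (hpf _ hmem (Set.mem_range_self j)))
      (hdisj.ne_of_mem (Set.mem_range_self i) (Set.mem_range_self j))
  exact freelyGenerates_of_disjoint_halfTree hT hAct he hf m n (hdisj' (he.adj m) (hf.adj n))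
    (hdisj' (he.adj m) (hf.adj_sub_one n)) (hdisj' (he.adj_sub_one m) (hf.adj n))

theorem freelyGenerates_or_inv_of_branch (hT : T.IsTree) (hAct : ActsByAut G T)
    (he : TranslatesAlong T g e) (hf : TranslatesAlong T h f) {m : ℤ}
    (hm : e m ∈ Set.range f) (hm' : e (m + 1) ∉ Set.range f) :
    FreelyGeneratesFreeSubsemigroup g h ∨ FreelyGeneratesFreeSubsemigroup g⁻¹ h := by
  obtain ⟨n, hn⟩ := hm
  have hdisj {i j : ℤ} (hi : T.Adj (e m) (e i)) (hj : T.Adj (f n) (f j)) (hij : e i ≠ f j) :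
      Disjoint (halfTree T (e m) (e i)) (halfTree T (f n) (f j)) := by
    rw [hn] at hj ⊢
    exact disjoint_halfTree hT hi hj hij
  have hout (j : ℤ) : e (m + 1) ≠ f j := fun h => hm' ⟨j, h.symm⟩
  have hff := hdisj (he.adj m) (hf.adj n) (hout _)
  have hfb := hdisj (he.adj m) (hf.adj_sub_one n) (hout _)
  by_cases hback : e (m - 1) = f (n + 1)
  · have hbb := hdisj (he.adj_sub_one m) (hf.adj_sub_one n)
      (hback ▸ (hf.sub_one_ne_add_one n).symm)
    have hneg₁ : -(-n + 1) = n - 1 := by ring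
    have hneg₂ : -(-n - 1) = n + 1 := by ring
    have hfree : FreelyGeneratesFreeSubsemigroup g h⁻¹ := by
      apply freelyGenerates_of_disjoint_halfTree hT hAct he hf.inv m (-n) <;>
        simpa only [neg_neg, hneg₁, hneg₂]
    exact Or.inr (by simpa only [inv_inv] using hfree.inv)
  · exact Or.inl (freelyGenerates_of_disjoint_halfTree hT hAct he hf m n hff hfb
      (hdisj (he.adj_sub_one m) (hf.adj n) hback))

theorem freelyGenerates_or_inv_of_not_range_subset (hT : T.IsTree) (hAct : ActsByAut G T)
    (he : TranslatesAlong T g e) (hf : TranslatesAlong T h f)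
    (hne : ¬ Set.range e ⊆ Set.range f) :
    FreelyGeneratesFreeSubsemigroup g h ∨ FreelyGeneratesFreeSubsemigroup g⁻¹ h := by
  by_cases hdisj : Disjoint (Set.range e) (Set.range f)
  · exact Or.inl (he.freelyGenerates_of_disjoint_range hT hAct hf hdisj)
  obtain ⟨_, ⟨m, rfl⟩, hm⟩ := Set.not_disjoint_iff.1 hdisj
  by_contra hnot
  have hsucc (i : ℤ) (hi : e i ∈ Set.range f) : e (i + 1) ∈ Set.range f := by
    by_contra hi'
    exact hnot (he.freelyGenerates_or_inv_of_branch hT hAct hf hi hi')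
  have hpred (i : ℤ) (hi : e i ∈ Set.range f) : e (i - 1) ∈ Set.range f := by
    by_contra hi'
    have := he.inv.freelyGenerates_or_inv_of_branch hT hAct hf (m := -i)
      (by simpa only [neg_neg] using hi) (by simpa only [neg_add', neg_neg] using hi')
    rw [inv_inv] at this
    exact hnot this.symm
  refine hne (Set.range_subset_iff.2 fun k => ?_)
  induction k using Int.inductionOn' (b := m) with
  | zero => exact hm
  | succ i _ hi => exact hsucc i hi
  | pred i _ hi => exact hpred i hi

theorem freelyGenerates_or_inv_of_range_ne (hT : T.IsTree) (hAct : ActsByAut G T)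
    (he : TranslatesAlong T g e) (hf : TranslatesAlong T h f) (hne : Set.range e ≠ Set.range f) :
    FreelyGeneratesFreeSubsemigroup g h ∨ FreelyGeneratesFreeSubsemigroup g⁻¹ h := by
  by_cases hef : Set.range e ⊆ Set.range f
  · have hfe : ¬ Set.range f ⊆ Set.range e := fun hfe => hne (hef.antisymm hfe)
    refine (hf.freelyGenerates_or_inv_of_not_range_subset hT hAct he hfe).imp (·.symm) fun h => ?_
    simpa only [inv_inv] using h.inv.symm
  · exact he.freelyGenerates_or_inv_of_not_range_subset hT hAct hf hef

/-- Two distinct lines translated by `h` would make `h` or `h⁻¹` freely generate a free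
subsemigroup together with `h` itself. -/
theorem range_eq (hT : T.IsTree) (hAct : ActsByAut G T) (he : TranslatesAlong T h e)
    (hf : TranslatesAlong T h f) : Set.range e = Set.range f := by
  by_contra hne
  rcases he.freelyGenerates_or_inv_of_range_ne hT hAct hf hne with hfree | hfree
  · exact hfree.ne rfl
  · exact hfree.inv_ne (inv_inv h)

end TranslatesAlong

/-- `h` swaps the endpoints of some edge, which is then `{v, h • v}`. -/
def InvertsEdge (T : SimpleGraph V) (h : G) : Prop := ∃ v, T.Adj v (h • v) ∧ h • h • v = v

theorem NoEdgeInversion.not_invertsEdge (hNoInv : NoEdgeInversion G T) (h : G) :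
    ¬ InvertsEdge T h :=
  fun ⟨v, hadj, hinv⟩ => hNoInv h v (h • v) hadj ⟨rfl, hinv⟩

theorem transLen_le_dist (T : SimpleGraph V) (h : G) (v : V) :
    transLen T h ≤ T.dist v (h • v) :=
  ciInf_le (OrderBot.bddBelow _) v

theorem nonempty_axis [Nonempty V] (T : SimpleGraph V) (h : G) : (Axis T h).Nonempty :=
  Nat.sInf_mem (Set.range_nonempty fun v : V => T.dist v (h • v))

theorem IsHyperbolic.transLen_pos (hT : T.Connected) {h : G} (hh : IsHyperbolic V h) :
    0 < transLen T h := by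
  have := hT.nonempty
  obtain ⟨v, hv⟩ := nonempty_axis T h
  rw [← show T.dist v (h • v) = transLen T h from hv]
  exact hT.pos_dist_of_ne fun hfix => hh ⟨v, hfix.symm⟩

theorem exists_equivariant_extension (h : G) {t : ℕ} (ht : 0 < t) (c : ℕ → V)
    (hc : c t = h • c 0) :
    ∃ f : ℤ → V, (∀ n, h • f n = f (n + t)) ∧ ∀ r : ℕ, r ≤ t → f r = c r := by
  let f : ℤ → V := fun n => h ^ (n / t) • c (n % t).toNat
  have hsmul (n : ℤ) : h • f n = f (n + t) := by
    have hdiv : (n + t) / (t : ℤ) = n / t + 1 := by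
      rw [Int.add_ediv_of_dvd_right dvd_rfl, Int.ediv_self (by omega)]
    simp only [f, hdiv, Int.add_emod_right, add_comm _ (1 : ℤ), zpow_one_add, mul_smul]
  have hlt (r : ℕ) (hr : r < t) : f r = c r := by
    have hdiv : (r : ℤ) / t = 0 := Int.ediv_eq_zero_of_lt (by omega) (by omega)
    have hmod : (r : ℤ) % t = r := Int.emod_eq_of_lt (by omega) (by omega)
    simp only [f, hdiv, hmod, zpow_zero, one_smul, Int.toNat_natCast]
  refine ⟨f, hsmul, fun r hr => ?_⟩
  rcases hr.lt_or_eq with hr | rfl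
  · exact hlt r hr
  · rw [hc, ← hlt 0 ht, Nat.cast_zero, hsmul, zero_add]

theorem exists_adj_extension_of_walk (hAct : ActsByAut G T) {h : G} {v : V}
    (p : T.Walk v (h • v)) (hp : 0 < p.length) :
    ∃ f : ℤ → V, f 0 = v ∧ (∀ n, T.Adj (f n) (f (n + 1))) ∧
      ∀ n, h • f n = f (n + p.length) := by
  obtain ⟨f, hsmul, hf⟩ := exists_equivariant_extension h hp p.getVert (by simp)
  have hperiodic : Function.Periodic (fun n => T.Adj (f n) (f (n + 1))) (p.length : ℤ) := by
    intro n
    beta_reduce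
    rw [add_right_comm, ← hsmul, ← hsmul, hAct.adj_smul_iff]
  refine ⟨f, by simpa using hf 0 (Nat.zero_le _), fun n => ?_, hsmul⟩
  obtain ⟨r, ⟨hr₀, hr⟩, heq⟩ := hperiodic.exists_mem_Ico₀ (by omega) n
  rw [heq]
  lift r to ℕ using hr₀
  have hr' : r < p.length := by omega
  have hsucc := hf (r + 1) hr'
  push_cast at hsucc
  rw [hf r hr'.le, hsucc]
  exact p.adj_getVert_succ hr'

theorem dist_add_natCast_le_of_adj (hT : T.Connected) {f : ℤ → V}
    (hadj : ∀ n, T.Adj (f n) (f (n + 1))) (n : ℤ) (k : ℕ) : T.dist (f n) (f (n + k)) ≤ k := by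
  induction k with
  | zero => simp
  | succ k ih =>
    have hstep := dist_eq_one_iff_adj.2 (hadj (n + k))
    have htri : T.dist (f n) (f (n + k + 1)) ≤
      T.dist (f n) (f (n + k)) + T.dist (f (n + k)) (f (n + k + 1)) := hT.dist_triangle
    rw [Nat.cast_succ, ← add_assoc]
    omega

theorem mem_axis_of_smul_eq_add_transLen (hT : T.Connected) {h : G} {f : ℤ → V}
    (hadj : ∀ n, T.Adj (f n) (f (n + 1))) (hsmul : ∀ n, h • f n = f (n + transLen T h)) (n : ℤ) :
    f n ∈ Axis T h := by
  refine le_antisymm ?_ (transLen_le_dist T h (f n))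
  rw [hsmul]
  exact dist_add_natCast_le_of_adj hT hadj n _

theorem translatesAlong_of_smul_eq_add_transLen (hT : T.Connected) {h : G}
    (hh : IsHyperbolic V h) (hinv : ¬ InvertsEdge T h) {f : ℤ → V}
    (hadj : ∀ n, T.Adj (f n) (f (n + 1))) (hsmul : ∀ n, h • f n = f (n + transLen T h)) :
    TranslatesAlong T h f where
  adj := hadj
  exists_smul_eq := ⟨transLen T h, hh.transLen_pos hT, hsmul⟩
  ne_add_two n hback := by
    -- By minimality of `transLen T h`, stretches of `f` of that length are geodesic, so `f` can
    -- only backtrack if `transLen T h = 1`, and then `h` inverts the edge at `f n`.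
    have haxis : T.dist (f n) (h • f n) = transLen T h :=
      mem_axis_of_smul_eq_add_transLen hT hadj hsmul n
    rcases (show 1 ≤ transLen T h from hh.transLen_pos hT).eq_or_lt with hone | htwo
    · rw [← hone, Nat.cast_one] at hsmul
      refine hinv ⟨f n, ?_, ?_⟩
      · rw [hsmul]
        exact hadj n
      · rw [hsmul, hsmul, add_assoc]
        exact hback.symm
    · obtain ⟨k, hk⟩ := Nat.exists_eq_add_of_le htwo
      have hshort := dist_add_natCast_le_of_adj hT hadj (n + 2) k
      rw [← hback, show n + 2 + k = n + transLen T h by rw [hk]; push_cast; ring, ← hsmul,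
        haxis] at hshort
      omega

theorem exists_translatesAlong_range_eq_axis (hT : T.IsTree) (hAct : ActsByAut G T) {h : G}
    (hh : IsHyperbolic V h) (hinv : ¬ InvertsEdge T h) :
    ∃ f : ℤ → V, TranslatesAlong T h f ∧ Set.range f = Axis T h := by
  have hline (v : V) (hv : v ∈ Axis T h) :
      ∃ f : ℤ → V, f 0 = v ∧ TranslatesAlong T h f ∧ Set.range f ⊆ Axis T h := by
    obtain ⟨p, hp⟩ := hT.1.exists_walk_length_eq_dist v (h • v)
    replace hp : p.length = transLen T h := hp.trans hv
    obtain ⟨f, hf₀, hadj, hsmul⟩ :=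
      exists_adj_extension_of_walk hAct p (hp ▸ hh.transLen_pos hT.1)
    rw [hp] at hsmul
    exact ⟨f, hf₀, translatesAlong_of_smul_eq_add_transLen hT.1 hh hinv hadj hsmul,
      Set.range_subset_iff.2 (mem_axis_of_smul_eq_add_transLen hT.1 hadj hsmul)⟩
  have := hT.1.nonempty
  obtain ⟨v, hv⟩ := nonempty_axis T h
  obtain ⟨f, -, hf, hsub⟩ := hline v hv
  refine ⟨f, hf, hsub.antisymm fun w hw => ?_⟩
  obtain ⟨e, he₀, he, -⟩ := hline w hw
  rw [← he.range_eq hT hAct hf]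
  exact ⟨0, he₀⟩

end GroupAction

theorem statement4_general {G V : Type*} [Group G] [MulAction G V] (T : SimpleGraph V)
    (hT : T.IsTree) (hAct : ActsByAut G T) (h1 h2 : G)
    (hinv1 : ¬ InvertsEdge T h1) (hinv2 : ¬ InvertsEdge T h2)
    (hh1 : IsHyperbolic V h1) (hh2 : IsHyperbolic V h2) (haxes : Axis T h1 ≠ Axis T h2) :
    FreelyGeneratesFreeSubsemigroup h1 h2 ∨ FreelyGeneratesFreeSubsemigroup h1⁻¹ h2 := by
  obtain ⟨f1, hf1, hrange1⟩ := exists_translatesAlong_range_eq_axis hT hAct hh1 hinv1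
  obtain ⟨f2, hf2, hrange2⟩ := exists_translatesAlong_range_eq_axis hT hAct hh2 hinv2
  rw [← hrange1, ← hrange2] at haxes
  exact hf1.freelyGenerates_or_inv_of_range_ne hT hAct hf2 haxes

/-- If `G` acts without edge inversions on a simplicial tree and `h1, h2`
are hyperbolic with distinct axes, then either `{h1, h2}` or `{h1⁻¹, h2}` freely generates
a rank 2 free subsemigroup of `G`. -/
theorem statement4 {G V : Type*} [Group G] [MulAction G V] (T : SimpleGraph V)
    (hT : T.IsTree) (hAct : ActsByAut G T) (hNoInv : NoEdgeInversion G T)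
    (h1 h2 : G) (hh1 : IsHyperbolic V h1) (hh2 : IsHyperbolic V h2)
    (haxes : Axis T h1 ≠ Axis T h2) :
    FreelyGeneratesFreeSubsemigroup h1 h2 ∨ FreelyGeneratesFreeSubsemigroup h1⁻¹ h2 := by
  exact statement4_general T hT hAct h1 h2 (hNoInv.not_invertsEdge h1)
    (hNoInv.not_invertsEdge h2) hh1 hh2 haxes
end
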